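/- There exists a constant c_p > 0 depending only on p such that if ψ̂(0) ≥ c_p·‖ψ‖₂, then for every l ∈ ℕ there is a constant M_{p,l} > 0 (depending only on p, l and ψ) such that for all τ ≥ 0: ‖k̃(·,τ) − ũ(0,τ)‖_{C^l[0,2π]} ≤ M_{p,l}·e^{−(3p−1)τ}, where ũ(0,τ) = (1/2π)∫₀^{2π} k̃(θ,τ) dθ is regarded as a constant function of θ. -/

import Mathlib

open Real MeasureTheory Filter Set

/-- The `n`-th Fourier coefficient of a `2π`-periodic function `f : ℝ → ℝ`:
`f̂(n) = (1/2π) ∫₀^{2π} f(θ) e^{-inθ} dθ`. -/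
noncomputable def fCoeff (f : ℝ → ℝ) (n : ℤ) : ℂ :=
  (1 / (2 * Real.pi)) * ∫ θ in (0:ℝ)..(2 * Real.pi),
    (f θ : ℂ) * Complex.exp (-(Complex.I * n * θ))

/-- The seminorm `‖f‖₂ = max{sup_n n²|Re f̂(n)|, sup_n n²|Im f̂(n)|}`. -/
noncomputable def seminorm2 (f : ℝ → ℝ) : ℝ :=
  max (⨆ n : ℤ, (n : ℝ)^2 * |(fCoeff f n).re|)
      (⨆ n : ℤ, (n : ℝ)^2 * |(fCoeff f n).im|)

/-- The `C^l[0,2π]` norm: `max_{0 ≤ j ≤ l} sup_{θ ∈ [0,2π]} |f^{(j)}(θ)|`. -/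
noncomputable def ClNorm (l : ℕ) (f : ℝ → ℝ) : ℝ :=
  ⨆ j : Fin (l + 1), ⨆ θ : Set.Icc (0:ℝ) (2 * Real.pi),
    |iteratedDeriv (j : ℕ) f (θ : ℝ)|

/-- `k : ℝ × [0,T) → ℝ` is a smooth, `2π`-periodic (in space), strictly positive solution of the
`p`-curve shortening equation
`∂k/∂t = k²(k^{p-1} ∂²k/∂θ² + (p-1) k^{p-2} (∂k/∂θ)² + (1/p) k^p)`
with initial datum `ψ` (smooth, strictly positive, `2π`-periodic), blow-up time `T`
(i.e. `sup_θ k(θ,t) → ∞` as `t → T⁻`), such that `k(·,t)` is the curvature of a simple closed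
convex curve for each `t`, i.e. `∫₀^{2π} e^{iθ}/k(θ,t) dθ = 0`. -/
def IsPCSF (p : ℕ) (T : ℝ) (k : ℝ → ℝ → ℝ) (ψ : ℝ → ℝ) : Prop :=
  ContDiffOn ℝ (⊤ : ℕ∞) (fun q : ℝ × ℝ => k q.1 q.2) (Set.univ ×ˢ Set.Ico 0 T) ∧
  (∀ θ t, k (θ + 2 * Real.pi) t = k θ t) ∧
  (∀ θ : ℝ, ∀ t ∈ Set.Ico (0:ℝ) T, 0 < k θ t) ∧
  (∀ θ : ℝ, ∀ t ∈ Set.Ico (0:ℝ) T,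
    HasDerivAt (fun s => k θ s)
      ((k θ t)^2 * ((k θ t)^(p - 1) * deriv (deriv (fun x => k x t)) θ
        + ((p : ℝ) - 1) * (k θ t)^(p - 2) * (deriv (fun x => k x t) θ)^2
        + (1 / (p : ℝ)) * (k θ t)^p)) t) ∧
  (∀ θ, k θ 0 = ψ θ) ∧
  ContDiff ℝ (⊤ : ℕ∞) ψ ∧ (∀ θ, 0 < ψ θ) ∧ (∀ θ, ψ (θ + 2 * Real.pi) = ψ θ) ∧
  Filter.Tendsto (fun t => ⨆ θ : Set.Icc (0:ℝ) (2 * Real.pi), k (θ : ℝ) t)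
    (nhdsWithin T (Set.Iio T)) Filter.atTop ∧
  (∀ t ∈ Set.Ico (0:ℝ) T,
    (∫ θ in (0:ℝ)..(2 * Real.pi), Complex.exp (Complex.I * θ) / (k θ t)) = 0)

/-- The original time `t` corresponding to the rescaled time `τ`:
`t = T(1 - e^{-(p+1)τ})`, i.e. `τ = -(1/(p+1))·log(1 - t/T)`. -/
noncomputable def tOf (p : ℕ) (T τ : ℝ) : ℝ := T * (1 - Real.exp (-((p : ℝ) + 1) * τ))

/-- The normalized curvature `k̃(θ,τ) = ((p+1)/p)^{1/(p+1)} (T-t)^{1/(p+1)} k(θ,t)`,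
with `t = T(1 - e^{-(p+1)τ})`. -/
noncomputable def ktilde (p : ℕ) (T : ℝ) (k : ℝ → ℝ → ℝ) (θ τ : ℝ) : ℝ :=
  (((p : ℝ) + 1) / (p : ℝ)) ^ ((1 : ℝ) / ((p : ℝ) + 1))
    * (T - tOf p T τ) ^ ((1 : ℝ) / ((p : ℝ) + 1)) * k θ (tOf p T τ)

/-!
The radius of curvature `r = 1 / k̃` solves the equation `∂r/∂τ = r - ∂²(r⁻ᵖ) - r⁻ᵖ`, and the
closing condition kills its Fourier coefficients of order `±1`. If `r` is close to its mean `m`,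
linearisation gives `d/dτ ∫ (∂r)² ≲ 2 ∫ (∂r)² - 2p m⁻⁽ᵖ⁺¹⁾ ∫ ((∂²r)² - (∂r)²)`, where
`∫ (∂²r)² ≥ 4 ∫ (∂r)²` because only modes of order at least `2` are present. A continuity argument
propagates closeness. Since `dm/dτ ≈ m - m⁻ᵖ` is unstable at `1`, blow-up exactly at time `T`
forces `m → 1`, and the energy then decays at the rate `6p - 2 = 2(3p - 1)`. Energy estimates for
higher derivatives, with lower-order terms as forcing, inherit this rate; Sobolev inequalities and
the chain rule turn it into the `Cˡ` estimate for `k̃`. The hypothesis on the Fourier coefficients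
of `ψ` makes `ψ`, hence `1/ψ`, close to its mean at the initial time.
-/

/-! ### Smooth periodic functions and their energies -/

lemma two_pi_nonneg : 0 ≤ 2 * π := two_pi_pos.le

lemma integral_period_mono {f g : ℝ → ℝ} (hf : Continuous f) (hg : Continuous g)
    (h : ∀ x, f x ≤ g x) : ∫ x in 0..(2 * π), f x ≤ ∫ x in 0..(2 * π), g x :=
  intervalIntegral.integral_mono two_pi_nonneg (hf.intervalIntegrable _ _)
    (hg.intervalIntegrable _ _) h

lemma sq_intervalIntegral_mul_le {f g : ℝ → ℝ} {a b : ℝ} (hab : a ≤ b) (hf : Continuous f)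
    (hg : Continuous g) :
    (∫ x in a..b, f x * g x) ^ 2 ≤ (∫ x in a..b, f x ^ 2) * ∫ x in a..b, g x ^ 2 := by
  have quadratic_nonneg (t : ℝ) : 0 ≤ (∫ x in a..b, f x ^ 2) * (t * t)
      + (2 * ∫ x in a..b, f x * g x) * t + ∫ x in a..b, g x ^ 2 := by
    have expand : ∫ x in a..b, (t * f x + g x) ^ 2 = (∫ x in a..b, f x ^ 2) * (t * t)
        + (2 * ∫ x in a..b, f x * g x) * t + ∫ x in a..b, g x ^ 2 := by
      have pointwise (x : ℝ) : (t * f x + g x) ^ 2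
          = t * t * f x ^ 2 + 2 * t * (f x * g x) + g x ^ 2 := by ring
      simp only [pointwise]
      rw [intervalIntegral.integral_add, intervalIntegral.integral_add,
        intervalIntegral.integral_const_mul, intervalIntegral.integral_const_mul]
      · ring
      all_goals exact Continuous.intervalIntegrable (by fun_prop) _ _
    exact expand ▸ intervalIntegral.integral_nonneg hab fun x _ => sq_nonneg _
  have := discrim_le_zero quadratic_nonneg
  rw [discrim] at this
  linarith

/-- Smooth `2π`-periodic functions: smooth functions of the tangent angle of a closed curve. -/
structure SmoothPeriodic (f : ℝ → ℝ) : Prop where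
  contDiff : ContDiff ℝ (⊤ : ℕ∞) f
  periodic : Function.Periodic f (2 * π)

/-- The homogeneous Sobolev energy `∫₀^{2π} (f⁽ʲ⁾)²` of order `j`. -/
noncomputable def derivEnergy (j : ℕ) (f : ℝ → ℝ) : ℝ :=
  ∫ x in 0..(2 * π), iteratedDeriv j f x ^ 2

/-- The mean `(1/2π) ∫₀^{2π} f` of a `2π`-periodic function. -/
noncomputable def periodMean (f : ℝ → ℝ) : ℝ := (2 * π)⁻¹ * ∫ x in 0..(2 * π), f x

lemma derivEnergy_nonneg (j : ℕ) (f : ℝ → ℝ) : 0 ≤ derivEnergy j f :=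
  intervalIntegral.integral_nonneg two_pi_nonneg fun _ _ => sq_nonneg _

lemma derivEnergy_one (f : ℝ → ℝ) : derivEnergy 1 f = ∫ x in 0..(2 * π), deriv f x ^ 2 := by
  simp only [derivEnergy, iteratedDeriv_one]

lemma derivEnergy_iteratedDeriv (i j : ℕ) (f : ℝ → ℝ) :
    derivEnergy i (iteratedDeriv j f) = derivEnergy (i + j) f := by
  simp only [derivEnergy, iteratedDeriv_eq_iterate, ← Function.iterate_add_apply]

lemma periodMean_pos {f : ℝ → ℝ} (hf : Continuous f) (pos : ∀ x, 0 < f x) : 0 < periodMean f :=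
  mul_pos (inv_pos.2 two_pi_pos) (intervalIntegral.intervalIntegral_pos_of_pos
    (hf.intervalIntegrable _ _) pos two_pi_pos)

lemma abs_periodMean_sub_le {f : ℝ → ℝ} (hf : Continuous f) {c d : ℝ} (h : ∀ x, |f x - c| ≤ d) :
    |periodMean f - c| ≤ d := by
  have mean_sub : periodMean f - c = (2 * π)⁻¹ * ∫ x in 0..(2 * π), (f x - c) := by
    rw [intervalIntegral.integral_sub (hf.intervalIntegrable _ _) (by simp), mul_sub, ← periodMean,
      intervalIntegral.integral_const, sub_zero, smul_eq_mul, inv_mul_cancel_left₀ two_pi_pos.ne']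
  have integral_le := intervalIntegral.norm_integral_le_of_norm_le_const (a := 0) (b := 2 * π)
    (f := fun x => f x - c) (C := d) fun x _ => h x
  rw [sub_zero, abs_of_pos two_pi_pos, Real.norm_eq_abs, mul_comm d] at integral_le
  rwa [mean_sub, abs_mul, abs_of_pos (inv_pos.2 two_pi_pos), inv_mul_le_iff₀ two_pi_pos]

namespace SmoothPeriodic

variable {f g : ℝ → ℝ}

lemma continuous (hf : SmoothPeriodic f) : Continuous f := hf.contDiff.continuous

lemma intervalIntegrable (hf : SmoothPeriodic f) (a b : ℝ) : IntervalIntegrable f volume a b :=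
  hf.continuous.intervalIntegrable a b

lemma apply_two_pi (hf : SmoothPeriodic f) : f (2 * π) = f 0 := by
  simpa using hf.periodic 0

lemma hasDerivAt (hf : SmoothPeriodic f) (x : ℝ) : HasDerivAt f (deriv f x) x :=
  (hf.contDiff.differentiable (by simp) x).hasDerivAt

protected lemma pow (hf : SmoothPeriodic f) (n : ℕ) : SmoothPeriodic fun x => f x ^ n :=
  ⟨hf.contDiff.pow n, fun x => congrArg (· ^ n) (hf.periodic x)⟩

protected lemma inv (hf : SmoothPeriodic f) (ne_zero : ∀ x, f x ≠ 0) :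
    SmoothPeriodic fun x => (f x)⁻¹ :=
  ⟨hf.contDiff.inv ne_zero, fun x => congrArg (·⁻¹) (hf.periodic x)⟩

protected lemma deriv (hf : SmoothPeriodic f) : SmoothPeriodic (deriv f) := by
  refine ⟨hf.contDiff.deriv', fun x => ?_⟩
  rw [← deriv_comp_add_const, hf.periodic.funext]

protected lemma iteratedDeriv (hf : SmoothPeriodic f) (j : ℕ) :
    SmoothPeriodic (iteratedDeriv j f) := by
  induction j with
  | zero => simpa only [iteratedDeriv_zero] using hf
  | succ n ih => simpa only [iteratedDeriv_succ] using ih.deriv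

lemma continuous_iteratedDeriv (hf : SmoothPeriodic f) (j : ℕ) : Continuous (iteratedDeriv j f) :=
  (hf.iteratedDeriv j).continuous

lemma hasDerivAt_iteratedDeriv (hf : SmoothPeriodic f) (j : ℕ) (x : ℝ) :
    HasDerivAt (iteratedDeriv j f) (iteratedDeriv (j + 1) f x) x := by
  simpa only [iteratedDeriv_succ] using (hf.iteratedDeriv j).hasDerivAt x

lemma integral_deriv_eq_zero (hf : SmoothPeriodic f) : ∫ x in 0..(2 * π), deriv f x = 0 := by
  rw [intervalIntegral.integral_eq_sub_of_hasDerivAt (fun x _ => hf.hasDerivAt x)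
    (hf.deriv.intervalIntegrable _ _), hf.apply_two_pi, sub_self]

lemma integral_mul_deriv_eq_neg (hf : SmoothPeriodic f) (hg : SmoothPeriodic g) :
    ∫ x in 0..(2 * π), f x * deriv g x = -∫ x in 0..(2 * π), deriv f x * g x := by
  rw [intervalIntegral.integral_mul_deriv_eq_deriv_mul (fun x _ => hf.hasDerivAt x)
    (fun x _ => hg.hasDerivAt x) (hf.deriv.intervalIntegrable _ _)
    (hg.deriv.intervalIntegrable _ _), hf.apply_two_pi, hg.apply_two_pi, sub_self, zero_sub]

lemma abs_sub_le_integral_abs_deriv (hf : SmoothPeriodic f) (x y : ℝ) :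
    |f x - f y| ≤ ∫ z in 0..(2 * π), |deriv f z| := by
  have ordered {a b : ℝ} (ha : a ∈ Ico 0 (2 * π)) (hb : b ∈ Ico 0 (2 * π)) (hab : a ≤ b) :
      |f b - f a| ≤ ∫ z in 0..(2 * π), |deriv f z| := by
    rw [← intervalIntegral.integral_eq_sub_of_hasDerivAt (fun z _ => hf.hasDerivAt z)
      (hf.deriv.intervalIntegrable a b)]
    exact (intervalIntegral.abs_integral_le_integral_abs hab).trans
      (intervalIntegral.integral_mono_interval ha.1 hab hb.2.le
        (Eventually.of_forall fun _ => abs_nonneg _)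
        (hf.deriv.continuous.abs.intervalIntegrable _ _))
  obtain ⟨x', hx', hfx⟩ := hf.periodic.exists_mem_Ico₀ two_pi_pos x
  obtain ⟨y', hy', hfy⟩ := hf.periodic.exists_mem_Ico₀ two_pi_pos y
  rw [hfx, hfy]
  rcases le_total x' y' with h | h
  · rw [abs_sub_comm]; exact ordered hx' hy' h
  · exact ordered hy' hx' h

lemma sq_sub_le (hf : SmoothPeriodic f) (x y : ℝ) :
    (f x - f y) ^ 2 ≤ 2 * π * derivEnergy 1 f := by
  have cauchy_schwarz := sq_intervalIntegral_mul_le two_pi_nonneg (f := fun _ => 1)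
    (g := fun z => |deriv f z|) continuous_const hf.deriv.continuous.abs
  calc (f x - f y) ^ 2 = |f x - f y| ^ 2 := (sq_abs _).symm
    _ ≤ (∫ z in 0..(2 * π), |deriv f z|) ^ 2 := by
      gcongr; exact hf.abs_sub_le_integral_abs_deriv x y
    _ ≤ 2 * π * derivEnergy 1 f := by simpa [derivEnergy_one] using cauchy_schwarz

lemma abs_sub_periodMean_le (hf : SmoothPeriodic f) {d : ℝ} (hd : 0 ≤ d)
    (h : 2 * π * derivEnergy 1 f ≤ d ^ 2) (x : ℝ) : |f x - periodMean f| ≤ d := by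
  rw [abs_sub_comm]
  exact abs_periodMean_sub_le hf.continuous fun y =>
    abs_le_of_sq_le_sq ((hf.sq_sub_le y x).trans h) hd

lemma exists_iteratedDeriv_eq_zero (hf : SmoothPeriodic f) {j : ℕ} (hj : j ≠ 0) :
    ∃ x, iteratedDeriv j f x = 0 := by
  obtain ⟨i, rfl⟩ := Nat.exists_eq_succ_of_ne_zero hj
  have hi := hf.iteratedDeriv i
  obtain ⟨c, -, hc⟩ := exists_deriv_eq_zero two_pi_pos hi.continuous.continuousOn
    hi.apply_two_pi.symm
  exact ⟨c, by rwa [iteratedDeriv_succ]⟩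

lemma sq_iteratedDeriv_le (hf : SmoothPeriodic f) {j : ℕ} (hj : j ≠ 0) (x : ℝ) :
    iteratedDeriv j f x ^ 2 ≤ 2 * π * derivEnergy (j + 1) f := by
  obtain ⟨c, hc⟩ := hf.exists_iteratedDeriv_eq_zero hj
  simpa only [hc, sub_zero, derivEnergy_iteratedDeriv, add_comm 1 j]
    using (hf.iteratedDeriv j).sq_sub_le x c

/-- Agmon's inequality, from `(g²)' = 2 g g'` and a zero of `g = f⁽ʲ⁾`. -/
lemma pow_four_iteratedDeriv_le (hf : SmoothPeriodic f) {j : ℕ} (hj : j ≠ 0) (x : ℝ) :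
    iteratedDeriv j f x ^ 4 ≤ 4 * derivEnergy j f * derivEnergy (j + 1) f := by
  obtain ⟨c, hc⟩ := hf.exists_iteratedDeriv_eq_zero hj
  have deriv_sq (y : ℝ) : |deriv (fun x => iteratedDeriv j f x ^ 2) y|
      = 2 * (|iteratedDeriv j f y| * |iteratedDeriv (j + 1) f y|) := by
    rw [((hf.hasDerivAt_iteratedDeriv j y).fun_pow 2).deriv]
    simp [abs_mul, mul_assoc]
  have sq_le := ((hf.iteratedDeriv j).pow 2).abs_sub_le_integral_abs_deriv x c
  simp only [deriv_sq, hc, intervalIntegral.integral_const_mul, zero_pow two_ne_zero,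
    sub_zero] at sq_le
  have cauchy_schwarz := sq_intervalIntegral_mul_le two_pi_nonneg
    (hf.continuous_iteratedDeriv j).abs (hf.continuous_iteratedDeriv (j + 1)).abs
  simp only [sq_abs] at cauchy_schwarz
  calc iteratedDeriv j f x ^ 4 = |iteratedDeriv j f x ^ 2| ^ 2 := by rw [sq_abs]; ring
    _ ≤ (2 * ∫ y in 0..(2 * π), |iteratedDeriv j f y| * |iteratedDeriv (j + 1) f y|) ^ 2 := by
      gcongr
    _ ≤ 4 * (derivEnergy j f * derivEnergy (j + 1) f) := by
      rw [mul_pow]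
      exact (mul_le_mul_of_nonneg_left cauchy_schwarz (by positivity)).trans_eq (by norm_num; rfl)
    _ = 4 * derivEnergy j f * derivEnergy (j + 1) f := by ring

end SmoothPeriodic

/-! ### Fourier coefficients -/

lemma fCoeff_eq_fourierCoeffOn (f : ℝ → ℝ) (n : ℤ) :
    fCoeff f n = fourierCoeffOn two_pi_pos (fun x => (f x : ℂ)) n := by
  have hpi : (π : ℂ) ≠ 0 := Complex.ofReal_ne_zero.2 pi_ne_zero
  rw [fourierCoeffOn_eq_integral, fCoeff, sub_zero, Complex.real_smul]
  congr 1
  · push_cast; rfl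
  · congr 1 with x
    rw [fourier_coe_apply, smul_eq_mul, mul_comm]
    congr 2
    push_cast
    field_simp

lemma fCoeff_zero (f : ℝ → ℝ) : fCoeff f 0 = periodMean f := by
  simp [fCoeff, periodMean, intervalIntegral.integral_ofReal]

lemma hasSum_sq_norm_fCoeff {f : ℝ → ℝ} (hf : Continuous f) :
    HasSum (fun n : ℤ => ‖fCoeff f n‖ ^ 2) ((2 * π)⁻¹ * ∫ x in 0..(2 * π), f x ^ 2) := by
  have hfc : Continuous fun x => (f x : ℂ) := by fun_prop
  obtain ⟨M, hM⟩ := (isCompact_Icc (a := 0) (b := 2 * π)).exists_bound_of_continuousOn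
    hfc.continuousOn
  have memLp : MemLp (fun x => (f x : ℂ)) 2 (volume.restrict (Ioc 0 (2 * π))) :=
    MemLp.of_bound hfc.aestronglyMeasurable M <| (ae_restrict_iff' measurableSet_Ioc).2 <|
      Eventually.of_forall fun x hx => hM x (Ioc_subset_Icc_self hx)
  simpa only [← fCoeff_eq_fourierCoeffOn, sub_zero, smul_eq_mul, Complex.norm_real,
    Real.norm_eq_abs, sq_abs] using hasSum_sq_fourierCoeffOn two_pi_pos memLp

namespace SmoothPeriodic

variable {f : ℝ → ℝ}

lemma fCoeff_deriv (hf : SmoothPeriodic f) (n : ℤ) :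
    fCoeff (deriv f) n = Complex.I * n * fCoeff f n := by
  rcases eq_or_ne n 0 with rfl | hn
  · rw [fCoeff_zero, periodMean, hf.integral_deriv_eq_zero]; simp
  · have hfc : Continuous fun x => ((deriv f x : ℝ) : ℂ) :=
      Complex.continuous_ofReal.comp hf.deriv.continuous
    have by_parts := fourierCoeffOn_of_hasDerivAt two_pi_pos hn
      (fun x _ => (hf.hasDerivAt x).ofReal_comp) (hfc.intervalIntegrable _ _)
    simp only [← fCoeff_eq_fourierCoeffOn, hf.apply_two_pi] at by_parts
    have hpi : (π : ℂ) ≠ 0 := Complex.ofReal_ne_zero.2 pi_ne_zero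
    have hn' : (n : ℂ) ≠ 0 := Int.cast_ne_zero.2 hn
    rw [by_parts]
    push_cast
    field_simp [Complex.I_ne_zero]
    ring

lemma sq_norm_fCoeff_iteratedDeriv (hf : SmoothPeriodic f) (j : ℕ) (n : ℤ) :
    ‖fCoeff (iteratedDeriv j f) n‖ ^ 2 = (n : ℝ) ^ (2 * j) * ‖fCoeff f n‖ ^ 2 := by
  induction j with
  | zero => simp
  | succ j ih =>
    rw [iteratedDeriv_succ, (hf.iteratedDeriv j).fCoeff_deriv, norm_mul, mul_pow, ih, norm_mul,
      Complex.norm_I, one_mul, Complex.norm_intCast, sq_abs]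
    ring

lemma hasSum_derivEnergy (hf : SmoothPeriodic f) (j : ℕ) :
    HasSum (fun n : ℤ => (n : ℝ) ^ (2 * j) * ‖fCoeff f n‖ ^ 2)
      ((2 * π)⁻¹ * derivEnergy j f) := by
  simpa only [hf.sq_norm_fCoeff_iteratedDeriv, derivEnergy] using
    hasSum_sq_norm_fCoeff (hf.continuous_iteratedDeriv j)

/-- Wirtinger's inequality on the orthogonal complement of the modes `±1`. -/
lemma four_mul_derivEnergy_one_le (hf : SmoothPeriodic f) (h1 : fCoeff f 1 = 0)
    (h2 : fCoeff f (-1) = 0) : 4 * derivEnergy 1 f ≤ derivEnergy 2 f := by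
  have termwise (n : ℤ) : 4 * ((n : ℝ) ^ (2 * 1) * ‖fCoeff f n‖ ^ 2)
      ≤ (n : ℝ) ^ (2 * 2) * ‖fCoeff f n‖ ^ 2 := by
    by_cases hn : n = 0 ∨ n = 1 ∨ n = -1
    · rcases hn with rfl | rfl | rfl <;> simp [h1, h2]
    · have four_le : (4 : ℝ) ≤ (n : ℝ) ^ 2 := by
        have : (4 : ℤ) ≤ n ^ 2 := by
          rcases (by omega : 2 ≤ n ∨ n ≤ -2) with h | h <;> nlinarith
        exact_mod_cast this
      calc 4 * ((n : ℝ) ^ (2 * 1) * ‖fCoeff f n‖ ^ 2)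
          ≤ (n : ℝ) ^ 2 * ((n : ℝ) ^ (2 * 1) * ‖fCoeff f n‖ ^ 2) := by gcongr
        _ = (n : ℝ) ^ (2 * 2) * ‖fCoeff f n‖ ^ 2 := by ring
  have := hasSum_le termwise ((hf.hasSum_derivEnergy 1).mul_left 4) (hf.hasSum_derivEnergy 2)
  rw [mul_left_comm] at this
  exact le_of_mul_le_mul_left this (inv_pos.2 two_pi_pos)

lemma pow_four_mul_sq_norm_fCoeff_le (hf : SmoothPeriodic f) (n : ℤ) :
    (n : ℝ) ^ 4 * ‖fCoeff f n‖ ^ 2 ≤ 2 * seminorm2 f ^ 2 := by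
  have bound (m : ℤ) : (m : ℝ) ^ 2 * ‖fCoeff f m‖ ≤ √((2 * π)⁻¹ * derivEnergy 2 f) := by
    refine Real.le_sqrt_of_sq_le ?_
    rw [mul_pow, ← pow_mul]
    exact le_hasSum (hf.hasSum_derivEnergy 2) m fun i _ => mul_nonneg
      (Even.pow_nonneg (by decide) _) (sq_nonneg _)
  have re_le : (n : ℝ) ^ 2 * |(fCoeff f n).re| ≤ seminorm2 f :=
    (le_ciSup (f := fun m : ℤ => (m : ℝ) ^ 2 * |(fCoeff f m).re|) ⟨_, forall_mem_range.2 fun m =>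
      (mul_le_mul_of_nonneg_left (Complex.abs_re_le_norm _) (sq_nonneg _)).trans (bound m)⟩
      n).trans (le_max_left _ _)
  have im_le : (n : ℝ) ^ 2 * |(fCoeff f n).im| ≤ seminorm2 f :=
    (le_ciSup (f := fun m : ℤ => (m : ℝ) ^ 2 * |(fCoeff f m).im|) ⟨_, forall_mem_range.2 fun m =>
      (mul_le_mul_of_nonneg_left (Complex.abs_im_le_norm _) (sq_nonneg _)).trans (bound m)⟩
      n).trans (le_max_right _ _)
  calc (n : ℝ) ^ 4 * ‖fCoeff f n‖ ^ 2
      = ((n : ℝ) ^ 2 * |(fCoeff f n).re|) ^ 2 + ((n : ℝ) ^ 2 * |(fCoeff f n).im|) ^ 2 := by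
        rw [Complex.sq_norm, Complex.normSq_apply, mul_pow, mul_pow, sq_abs, sq_abs]; ring
    _ ≤ seminorm2 f ^ 2 + seminorm2 f ^ 2 := by gcongr
    _ = 2 * seminorm2 f ^ 2 := by ring

lemma derivEnergy_one_le_seminorm2 (hf : SmoothPeriodic f) :
    derivEnergy 1 f ≤ 4 * π * (∑' n : ℤ, ((n : ℝ) ^ 2)⁻¹) * seminorm2 f ^ 2 := by
  have summable : Summable fun n : ℤ => ((n : ℝ) ^ 2)⁻¹ := by
    simpa using Real.summable_one_div_int_pow (p := 2)
  have termwise (n : ℤ) : (n : ℝ) ^ (2 * 1) * ‖fCoeff f n‖ ^ 2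
      ≤ 2 * seminorm2 f ^ 2 * ((n : ℝ) ^ 2)⁻¹ := by
    rcases eq_or_ne n 0 with rfl | hn
    · simp
    · rw [← div_eq_mul_inv, le_div_iff₀ (by positivity)]
      exact (hf.pow_four_mul_sq_norm_fCoeff_le n).trans' (le_of_eq (by ring))
  have := hasSum_le termwise (hf.hasSum_derivEnergy 1) (summable.hasSum.mul_left _)
  rw [inv_mul_le_iff₀ two_pi_pos] at this
  exact this.trans_eq (by ring)

end SmoothPeriodic

lemma sum_Icc_pow_le {x η : ℝ} (hη : 0 < η) (hx : x = 0 ∨ 1 ≤ x) (l : ℕ) :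
    ∑ j ∈ Finset.Icc 1 l, x ^ j ≤ η * x ^ (l + 1) + l * (l / η) ^ (l - 1) * x := by
  rcases hx with rfl | hx
  · have : ∑ j ∈ Finset.Icc 1 l, (0 : ℝ) ^ j = 0 :=
      Finset.sum_eq_zero fun j hj => zero_pow (by have := Finset.mem_Icc.1 hj; omega)
    simp [this]
  · have sum_le : ∑ j ∈ Finset.Icc 1 l, x ^ j ≤ l * x ^ l := by
      simpa using Finset.sum_le_card_nsmul (Finset.Icc 1 l) (fun j => x ^ j) (x ^ l)
        fun j hj => pow_le_pow_right₀ hx (Finset.mem_Icc.1 hj).2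
    refine sum_le.trans ?_
    rcases le_total (l / η) x with large | small
    · have : l * x ^ l ≤ η * x ^ (l + 1) := by
        rw [pow_succ', ← mul_assoc]
        gcongr
        rwa [div_le_iff₀' hη] at large
      linarith [show 0 ≤ l * (l / η) ^ (l - 1) * x by positivity]
    · have : l * x ^ l ≤ l * (l / η) ^ (l - 1) * x := by
        rcases l with _ | l
        · simp
        · rw [Nat.add_sub_cancel, pow_succ, ← mul_assoc]
          gcongr
      linarith [show 0 ≤ η * x ^ (l + 1) by positivity]

lemma exists_sum_derivEnergy_le (l : ℕ) {η : ℝ} (hη : 0 < η) :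
    ∃ C : ℝ, 0 ≤ C ∧ ∀ f : ℝ → ℝ, SmoothPeriodic f →
      ∑ j ∈ Finset.Icc 1 l, derivEnergy j f ≤ η * derivEnergy (l + 1) f + C * derivEnergy 1 f := by
  set C : ℝ := l * (l / η) ^ (l - 1)
  refine ⟨C, by positivity, fun f hf => ?_⟩
  have termwise (n : ℤ) : ∑ j ∈ Finset.Icc 1 l, (n : ℝ) ^ (2 * j) * ‖fCoeff f n‖ ^ 2
      ≤ η * ((n : ℝ) ^ (2 * (l + 1)) * ‖fCoeff f n‖ ^ 2)
        + C * ((n : ℝ) ^ (2 * 1) * ‖fCoeff f n‖ ^ 2) := by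
    have hn : (n : ℝ) ^ 2 = 0 ∨ 1 ≤ (n : ℝ) ^ 2 := by
      rcases eq_or_ne n 0 with rfl | hn
      · simp
      · exact Or.inr (by exact_mod_cast (sq_pos_of_ne_zero hn : 0 < n ^ 2))
    simp only [← Finset.sum_mul, pow_mul, pow_one]
    calc (∑ j ∈ Finset.Icc 1 l, ((n : ℝ) ^ 2) ^ j) * ‖fCoeff f n‖ ^ 2
        ≤ (η * ((n : ℝ) ^ 2) ^ (l + 1) + C * (n : ℝ) ^ 2) * ‖fCoeff f n‖ ^ 2 := by
          gcongr; exact sum_Icc_pow_le hη hn l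
      _ = _ := by ring
  have := hasSum_le termwise (hasSum_sum fun j _ => hf.hasSum_derivEnergy j)
    (((hf.hasSum_derivEnergy (l + 1)).mul_left η).add ((hf.hasSum_derivEnergy 1).mul_left C))
  rw [← Finset.mul_sum, mul_left_comm η, mul_left_comm C, ← mul_add] at this
  exact le_of_mul_le_mul_left this (inv_pos.2 two_pi_pos)

/-! ### Derivatives of powers of the curvature `1 / r` -/

namespace SmoothPeriodic

variable {r : ℝ → ℝ}

protected lemma inv_pow (hr : SmoothPeriodic r) (ne_zero : ∀ x, r x ≠ 0) (n : ℕ) :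
    SmoothPeriodic (r⁻¹ ^ n) :=
  (hr.inv ne_zero).pow n

lemma deriv_inv_pow (hr : SmoothPeriodic r) (ne_zero : ∀ x, r x ≠ 0) (n : ℕ) :
    deriv (r⁻¹ ^ n) = fun x => -(n : ℝ) * ((r⁻¹ ^ (n + 1)) x * deriv r x) := by
  funext x
  rw [(((hr.hasDerivAt x).inv (ne_zero x)).pow n).deriv]
  have := ne_zero x
  rcases n with _ | n
  · simp
  · simp only [Nat.add_sub_cancel, Pi.pow_apply, Pi.inv_apply, inv_pow]
    field_simp
    ring

lemma iteratedDeriv_succ_inv_pow (hr : SmoothPeriodic r) (ne_zero : ∀ x, r x ≠ 0) (n m : ℕ)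
    (x : ℝ) : iteratedDeriv (m + 1) (r⁻¹ ^ n) x = -(n : ℝ) * ∑ s ∈ Finset.range (m + 1),
      (m.choose s : ℝ) * (iteratedDeriv s (r⁻¹ ^ (n + 1)) x * iteratedDeriv (m + 1 - s) r x) := by
  have hu : ContDiffAt ℝ m (r⁻¹ ^ (n + 1)) x :=
    (hr.inv_pow ne_zero (n + 1)).contDiff.contDiffAt.of_le (by exact_mod_cast le_top)
  have hr' : ContDiffAt ℝ m (deriv r) x :=
    hr.deriv.contDiff.contDiffAt.of_le (by exact_mod_cast le_top)
  rw [iteratedDeriv_succ', hr.deriv_inv_pow ne_zero, iteratedDeriv_const_mul_field,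
    iteratedDeriv_fun_mul hu hr']
  congr 1
  refine Finset.sum_congr rfl fun s hs => ?_
  rw [Nat.sub_add_comm (Nat.lt_succ_iff.1 (Finset.mem_range.1 hs)), iteratedDeriv_succ', mul_assoc]

end SmoothPeriodic

/-- The commutator `∂ˡ⁺¹(r⁻ⁿ) + n r⁻⁽ⁿ⁺¹⁾ ∂ˡ⁺¹r`: what is left of the derivative of order `l + 1` of
`r⁻ⁿ` once the term containing the derivative of order `l + 1` of `r` is removed. -/
noncomputable def invPowCommutator (n l : ℕ) (r : ℝ → ℝ) (x : ℝ) : ℝ :=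
  iteratedDeriv (l + 1) (r⁻¹ ^ n) x + n * ((r⁻¹ ^ (n + 1)) x * iteratedDeriv (l + 1) r x)

lemma abs_sum_choose_mul_le {S : Finset ℕ} {m : ℕ} (hS : S ⊆ Finset.range (m + 1)) {a : ℕ → ℝ}
    {D : ℝ} (hD : 0 ≤ D) (ha : ∀ s ∈ S, |a s| ≤ D) :
    |∑ s ∈ S, (m.choose s : ℝ) * a s| ≤ 2 ^ m * D :=
  calc |∑ s ∈ S, (m.choose s : ℝ) * a s| ≤ ∑ s ∈ S, (m.choose s : ℝ) * D := by
        refine (Finset.abs_sum_le_sum_abs _ _).trans (Finset.sum_le_sum fun s hs => ?_)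
        rw [abs_mul, Nat.abs_cast]
        gcongr
        exact ha s hs
    _ ≤ ∑ s ∈ Finset.range (m + 1), (m.choose s : ℝ) * D :=
        Finset.sum_le_sum_of_subset_of_nonneg hS fun _ _ _ => by positivity
    _ = 2 ^ m * D := by rw [← Finset.sum_mul, ← Nat.cast_sum, Nat.sum_range_choose]; push_cast; rfl

namespace SmoothPeriodic

variable {r : ℝ → ℝ}

lemma continuous_invPowCommutator (hr : SmoothPeriodic r) (ne_zero : ∀ x, r x ≠ 0) (n l : ℕ) :
    Continuous (invPowCommutator n l r) := by
  have h₁ := (hr.inv_pow ne_zero n).continuous_iteratedDeriv (l + 1)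
  have h₂ := (hr.inv_pow ne_zero (n + 1)).continuous
  have h₃ := hr.continuous_iteratedDeriv (l + 1)
  unfold invPowCommutator
  fun_prop

lemma abs_iteratedDeriv_succ_inv_pow_le (hr : SmoothPeriodic r) (ne_zero : ∀ x, r x ≠ 0) {n m : ℕ}
    {x D : ℝ} (hD : 0 ≤ D) (h : ∀ s ≤ m,
      |iteratedDeriv s (r⁻¹ ^ (n + 1)) x| * |iteratedDeriv (m + 1 - s) r x| ≤ D) :
    |iteratedDeriv (m + 1) (r⁻¹ ^ n) x| ≤ n * (2 ^ m * D) := by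
  rw [hr.iteratedDeriv_succ_inv_pow ne_zero, abs_mul, abs_neg, Nat.abs_cast]
  gcongr
  refine abs_sum_choose_mul_le subset_rfl hD fun s hs => ?_
  rw [abs_mul]
  exact h s (Nat.lt_succ_iff.1 (Finset.mem_range.1 hs))

lemma abs_invPowCommutator_le (hr : SmoothPeriodic r) (ne_zero : ∀ x, r x ≠ 0) {n l : ℕ}
    {x D : ℝ} (hD : 0 ≤ D) (h : ∀ s, s ≠ 0 → s ≤ l →
      |iteratedDeriv s (r⁻¹ ^ (n + 1)) x| * |iteratedDeriv (l + 1 - s) r x| ≤ D) :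
    |invPowCommutator n l r x| ≤ n * (2 ^ l * D) := by
  have sum_erase : invPowCommutator n l r x = -(n : ℝ) * ∑ s ∈ (Finset.range (l + 1)).erase 0,
      (l.choose s : ℝ)
        * (iteratedDeriv s (r⁻¹ ^ (n + 1)) x * iteratedDeriv (l + 1 - s) r x) := by
    rw [invPowCommutator, hr.iteratedDeriv_succ_inv_pow ne_zero,
      ← Finset.add_sum_erase _ _ (Finset.mem_range.2 l.succ_pos)]
    simp only [Nat.choose_zero_right, Nat.cast_one, iteratedDeriv_zero, Nat.sub_zero]
    ring
  rw [sum_erase, abs_mul, abs_neg, Nat.abs_cast]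
  gcongr
  refine abs_sum_choose_mul_le (Finset.erase_subset _ _) hD fun s hs => ?_
  rw [abs_mul]
  obtain ⟨ne, mem⟩ := Finset.mem_erase.1 hs
  exact h s ne (Nat.lt_succ_iff.1 (Finset.mem_range.1 mem))

end SmoothPeriodic

/-- The pointwise size `∑_{1 ≤ j ≤ i} |r⁽ʲ⁾(x)|` of the derivatives of orders `1, …, i`. -/
noncomputable def derivAbsSum (r : ℝ → ℝ) (i : ℕ) (x : ℝ) : ℝ :=
  ∑ j ∈ Finset.Icc 1 i, |iteratedDeriv j r x|

lemma derivAbsSum_nonneg (r : ℝ → ℝ) (i : ℕ) (x : ℝ) : 0 ≤ derivAbsSum r i x :=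
  Finset.sum_nonneg fun _ _ => abs_nonneg _

lemma abs_iteratedDeriv_le_derivAbsSum (r : ℝ → ℝ) {i j : ℕ} (hj : j ≠ 0) (hji : j ≤ i) (x : ℝ) :
    |iteratedDeriv j r x| ≤ derivAbsSum r i x :=
  Finset.single_le_sum (f := fun j => |iteratedDeriv j r x|) (fun _ _ => abs_nonneg _)
    (Finset.mem_Icc.2 ⟨Nat.one_le_iff_ne_zero.2 hj, hji⟩)

lemma derivAbsSum_mono (r : ℝ → ℝ) {i j : ℕ} (h : i ≤ j) (x : ℝ) :
    derivAbsSum r i x ≤ derivAbsSum r j x :=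
  Finset.sum_le_sum_of_subset_of_nonneg (Finset.Icc_subset_Icc_right h) fun _ _ _ => abs_nonneg _

lemma derivAbsSum_succ (r : ℝ → ℝ) (i : ℕ) (x : ℝ) :
    derivAbsSum r (i + 1) x = derivAbsSum r i x + |iteratedDeriv (i + 1) r x| :=
  Finset.sum_Icc_succ_top (by omega) _

lemma SmoothPeriodic.continuous_derivAbsSum {r : ℝ → ℝ} (hr : SmoothPeriodic r) (i : ℕ) :
    Continuous (derivAbsSum r i) :=
  continuous_finsetSum _ fun j _ => (hr.continuous_iteratedDeriv j).abs

lemma SmoothPeriodic.integral_sq_derivAbsSum_le {r : ℝ → ℝ} (hr : SmoothPeriodic r) (l : ℕ) :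
    ∫ x in 0..(2 * π), derivAbsSum r l x ^ 2 ≤ l * ∑ j ∈ Finset.Icc 1 l, derivEnergy j r := by
  have cont (j : ℕ) := hr.continuous_iteratedDeriv j
  calc ∫ x in 0..(2 * π), derivAbsSum r l x ^ 2
      ≤ ∫ x in 0..(2 * π), l * ∑ j ∈ Finset.Icc 1 l, iteratedDeriv j r x ^ 2 := by
        refine integral_period_mono ((hr.continuous_derivAbsSum l).pow 2) (by fun_prop) fun x => ?_
        simpa [derivAbsSum] using sq_sum_le_card_mul_sum_sq (s := Finset.Icc 1 l)
          (f := fun j => |iteratedDeriv j r x|)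
    _ = l * ∑ j ∈ Finset.Icc 1 l, derivEnergy j r := by
        rw [intervalIntegral.integral_const_mul, intervalIntegral.integral_finsetSum]
        · rfl
        · exact fun j _ => ((cont j).pow 2).intervalIntegrable _ _

/-- A positive smooth periodic radius of curvature whose curvature `1 / r` is at most `U`. -/
structure BoundedCurvature (U : ℝ) (r : ℝ → ℝ) : Prop extends SmoothPeriodic r where
  pos : ∀ x, 0 < r x
  inv_le : ∀ x, (r x)⁻¹ ≤ U

/-- A radius of curvature with curvature at most `U` and derivatives of orders `1, …, N` bounded
by `B`. -/
structure ControlledRadius (U B : ℝ) (N : ℕ) (r : ℝ → ℝ) : Prop extends BoundedCurvature U r where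
  abs_iteratedDeriv_le : ∀ j, j ≠ 0 → j ≤ N → ∀ x, |iteratedDeriv j r x| ≤ B

namespace BoundedCurvature

variable {U : ℝ} {r : ℝ → ℝ}

lemma ne_zero (hr : BoundedCurvature U r) (x : ℝ) : r x ≠ 0 := (hr.pos x).ne'

lemma bound_nonneg (hr : BoundedCurvature U r) : 0 ≤ U :=
  (inv_pos.2 (hr.pos 0)).le.trans (hr.inv_le 0)

lemma abs_inv_pow_le (hr : BoundedCurvature U r) (n : ℕ) (x : ℝ) : |(r⁻¹ ^ n) x| ≤ U ^ n := by
  have := inv_pos.2 (hr.pos x)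
  rw [Pi.pow_apply, Pi.inv_apply, abs_of_pos (by positivity)]
  gcongr
  exact hr.inv_le x

lemma abs_iteratedDeriv_one_inv_pow_le (hr : BoundedCurvature U r) (n : ℕ) (x : ℝ) :
    |iteratedDeriv 1 (r⁻¹ ^ n) x| ≤ n * U ^ (n + 1) * |iteratedDeriv 1 r x| := by
  have hU := hr.bound_nonneg
  refine (hr.abs_iteratedDeriv_succ_inv_pow_le hr.ne_zero (m := 0)
    (D := U ^ (n + 1) * |iteratedDeriv 1 r x|) (by positivity) fun s hs => ?_).trans_eq (by ring)
  obtain rfl := Nat.le_zero.1 hs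
  rw [iteratedDeriv_zero]
  gcongr
  exact hr.abs_inv_pow_le _ x

end BoundedCurvature

lemma exists_abs_iteratedDeriv_two_inv_pow_le {U : ℝ} (hU : 0 ≤ U) (n : ℕ) :
    ∃ C : ℝ, 0 ≤ C ∧ ∀ r, BoundedCurvature U r → ∀ x, |iteratedDeriv 2 (r⁻¹ ^ n) x|
      ≤ C * (|iteratedDeriv 2 r x| + |iteratedDeriv 1 r x| ^ 2) := by
  set K := max (U ^ (n + 1)) (((n + 1 : ℕ) : ℝ) * U ^ (n + 2))
  have : 0 ≤ K := le_max_of_le_left (by positivity)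
  refine ⟨n * (2 * K), by positivity, fun r hr x => ?_⟩
  set a := |iteratedDeriv 1 r x|
  set b := |iteratedDeriv 2 r x|
  have leibniz_terms (s : ℕ) (hs : s ≤ 1) :
      |iteratedDeriv s (r⁻¹ ^ (n + 1)) x| * |iteratedDeriv (1 + 1 - s) r x| ≤ K * (b + a ^ 2) := by
    interval_cases s
    · rw [iteratedDeriv_zero]
      calc |(r⁻¹ ^ (n + 1)) x| * b ≤ K * b := by
            gcongr; exact (hr.abs_inv_pow_le _ x).trans (le_max_left _ _)
        _ ≤ K * (b + a ^ 2) := by gcongr; linarith [sq_nonneg a]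
    · calc |iteratedDeriv 1 (r⁻¹ ^ (n + 1)) x| * a ≤ K * a * a := by
            gcongr
            refine (hr.abs_iteratedDeriv_one_inv_pow_le (n + 1) x).trans ?_
            gcongr
            exact le_max_right _ _
        _ = K * a ^ 2 := by ring
        _ ≤ K * (b + a ^ 2) := by gcongr; linarith [abs_nonneg (iteratedDeriv 2 r x)]
  exact (hr.abs_iteratedDeriv_succ_inv_pow_le hr.ne_zero (m := 1) (by positivity)
    leibniz_terms).trans_eq (by ring)

lemma exists_abs_invPowCommutator_two_le {U : ℝ} (hU : 0 ≤ U) (n : ℕ) :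
    ∃ C : ℝ, 0 ≤ C ∧ ∀ r, BoundedCurvature U r → ∀ x, |invPowCommutator n 2 r x|
      ≤ C * (|iteratedDeriv 1 r x| * |iteratedDeriv 2 r x| + |iteratedDeriv 1 r x| ^ 3) := by
  obtain ⟨C₂, hC₂, second_le⟩ := exists_abs_iteratedDeriv_two_inv_pow_le hU (n + 1)
  set K := max C₂ (((n + 1 : ℕ) : ℝ) * U ^ (n + 2))
  have : 0 ≤ K := hC₂.trans (le_max_left _ _)
  refine ⟨n * (4 * K), by positivity, fun r hr x => ?_⟩
  set a := |iteratedDeriv 1 r x|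
  set b := |iteratedDeriv 2 r x|
  have leibniz_terms (s : ℕ) (hs0 : s ≠ 0) (hs : s ≤ 2) :
      |iteratedDeriv s (r⁻¹ ^ (n + 1)) x| * |iteratedDeriv (2 + 1 - s) r x|
        ≤ K * (a * b + a ^ 3) := by
    interval_cases s
    · exact absurd rfl hs0
    · calc |iteratedDeriv 1 (r⁻¹ ^ (n + 1)) x| * b ≤ K * a * b := by
            gcongr
            refine (hr.abs_iteratedDeriv_one_inv_pow_le (n + 1) x).trans ?_
            gcongr
            exact le_max_right _ _
        _ = K * (a * b) := mul_assoc _ _ _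
        _ ≤ K * (a * b + a ^ 3) := by gcongr; linarith [show 0 ≤ a ^ 3 by positivity]
    · calc |iteratedDeriv 2 (r⁻¹ ^ (n + 1)) x| * a ≤ K * (b + a ^ 2) * a := by
            gcongr
            refine (second_le r hr x).trans ?_
            gcongr
            exact le_max_left _ _
        _ = K * (a * b + a ^ 3) := by ring
  exact (hr.abs_invPowCommutator_le hr.ne_zero (by positivity) leibniz_terms).trans_eq (by ring)

namespace ControlledRadius

variable {U B : ℝ} {N : ℕ} {r : ℝ → ℝ}

lemma derivAbsSum_le (hr : ControlledRadius U B N r) (hB : 0 ≤ B) {s : ℕ} (hs : s ≤ N) (x : ℝ) :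
    derivAbsSum r s x ≤ N * B := by
  have sum_le := Finset.sum_le_card_nsmul (Finset.Icc 1 s) (fun j => |iteratedDeriv j r x|) B
    fun j hj => by
      obtain ⟨one_le, le⟩ := Finset.mem_Icc.1 hj
      exact hr.abs_iteratedDeriv_le j (by omega) (le.trans hs) x
  rw [Nat.card_Icc, Nat.add_sub_cancel, nsmul_eq_mul] at sum_le
  exact sum_le.trans (by gcongr)

lemma one_add_derivAbsSum_mul_le (hr : ControlledRadius U B N r) (hN : N ≠ 0) (hB : 0 ≤ B)
    {m s : ℕ} (hm : m ≤ N + 1) (hs : s ≤ m) (x : ℝ) :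
    (1 + derivAbsSum r s x) * |iteratedDeriv (m + 1 - s) r x|
      ≤ (1 + N * B + B) * derivAbsSum r (m + 1) x := by
  have sum_nonneg := derivAbsSum_nonneg r (m + 1) x
  have factor_le := abs_iteratedDeriv_le_derivAbsSum r (i := m + 1) (j := m + 1 - s) (by omega)
    (by omega) x
  rcases le_or_gt s N with low | high
  · calc (1 + derivAbsSum r s x) * |iteratedDeriv (m + 1 - s) r x|
        ≤ (1 + N * B) * derivAbsSum r (m + 1) x := by gcongr; exact hr.derivAbsSum_le hB low x
      _ ≤ (1 + N * B + B) * derivAbsSum r (m + 1) x :=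
          mul_le_mul_of_nonneg_right (le_add_of_nonneg_right hB) sum_nonneg
  · rw [show m + 1 - s = 1 by omega] at factor_le ⊢
    have first_le := hr.abs_iteratedDeriv_le 1 one_ne_zero (by omega) x
    calc (1 + derivAbsSum r s x) * |iteratedDeriv 1 r x|
        = |iteratedDeriv 1 r x| + derivAbsSum r s x * |iteratedDeriv 1 r x| := by ring
      _ ≤ derivAbsSum r (m + 1) x + derivAbsSum r (m + 1) x * B := by
          gcongr; exact derivAbsSum_mono r (by omega) x
      _ = (1 + B) * derivAbsSum r (m + 1) x := by ring
      _ ≤ (1 + N * B + B) * derivAbsSum r (m + 1) x := by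
          gcongr; exact le_add_of_nonneg_right (by positivity)

lemma abs_iteratedDeriv_succ_inv_pow_le_derivAbsSum (hr : ControlledRadius U B N r) (hN : N ≠ 0)
    (hB : 0 ≤ B) {C : ℝ} (hC : 0 ≤ C) {m n : ℕ} (hm : m ≤ N + 1) {x : ℝ}
    (h : ∀ s ≤ m, |iteratedDeriv s (r⁻¹ ^ (n + 1)) x| ≤ C * (1 + derivAbsSum r s x)) :
    |iteratedDeriv (m + 1) (r⁻¹ ^ n) x|
      ≤ n * (2 ^ m * (C * (1 + N * B + B))) * derivAbsSum r (m + 1) x := by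
  have sum_nonneg := derivAbsSum_nonneg r (m + 1) x
  refine (hr.abs_iteratedDeriv_succ_inv_pow_le hr.ne_zero
    (D := C * ((1 + N * B + B) * derivAbsSum r (m + 1) x)) (by positivity) fun s hs => ?_).trans_eq
    (by ring)
  calc |iteratedDeriv s (r⁻¹ ^ (n + 1)) x| * |iteratedDeriv (m + 1 - s) r x|
      ≤ C * (1 + derivAbsSum r s x) * |iteratedDeriv (m + 1 - s) r x| := by gcongr; exact h s hs
    _ = C * ((1 + derivAbsSum r s x) * |iteratedDeriv (m + 1 - s) r x|) := mul_assoc _ _ _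
    _ ≤ C * ((1 + N * B + B) * derivAbsSum r (m + 1) x) :=
      mul_le_mul_of_nonneg_left (hr.one_add_derivAbsSum_mul_le hN hB hm hs x) hC

lemma one_add_derivAbsSum_mul_le_of_ne_zero (hr : ControlledRadius U B N r) (hN : N ≠ 0)
    (hB : 0 ≤ B) {s : ℕ} (hs0 : s ≠ 0) (hs : s ≤ N + 2) (x : ℝ) :
    (1 + derivAbsSum r s x) * |iteratedDeriv (N + 2 + 1 - s) r x| ≤ (1 + N * B + B)
      * (derivAbsSum r (N + 2) x + |iteratedDeriv (N + 1) r x| * |iteratedDeriv 2 r x|) := by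
  set P := |iteratedDeriv (N + 1) r x| * |iteratedDeriv 2 r x|
  set S := derivAbsSum r (N + 2) x
  have sum_nonneg : 0 ≤ S := derivAbsSum_nonneg r (N + 2) x
  have factor_le : |iteratedDeriv (N + 2 + 1 - s) r x| ≤ S :=
    abs_iteratedDeriv_le_derivAbsSum r (by omega) (by omega) x
  have hNB : 0 ≤ N * B := by positivity
  have hP0 : 0 ≤ P := by positivity
  have dominate {c : ℝ} (hc : c ≤ 1 + N * B + B) : c * S + P ≤ (1 + N * B + B) * (S + P) := by
    nlinarith [mul_le_mul_of_nonneg_right hc sum_nonneg, mul_nonneg hNB hP0, mul_nonneg hB hP0]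
  rcases (by omega : s ≤ N ∨ s = N + 1 ∨ s = N + 2) with low | rfl | rfl
  · calc (1 + derivAbsSum r s x) * |iteratedDeriv (N + 2 + 1 - s) r x| ≤ (1 + N * B) * S := by
          gcongr; exact hr.derivAbsSum_le hB low x
      _ ≤ (1 + N * B) * S + P := le_add_of_nonneg_right hP0
      _ ≤ _ := dominate (by linarith)
  · rw [show N + 2 + 1 - (N + 1) = 2 by omega] at factor_le ⊢
    calc (1 + derivAbsSum r (N + 1) x) * |iteratedDeriv 2 r x|
        = (1 + derivAbsSum r N x) * |iteratedDeriv 2 r x| + P := by rw [derivAbsSum_succ]; ring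
      _ ≤ (1 + N * B) * S + P := by gcongr; exact hr.derivAbsSum_le hB le_rfl x
      _ ≤ _ := dominate (by linarith)
  · rw [Nat.add_sub_cancel_left] at factor_le ⊢
    have first_le := hr.abs_iteratedDeriv_le 1 one_ne_zero (by omega) x
    calc (1 + S) * |iteratedDeriv 1 r x| = |iteratedDeriv 1 r x| + S * |iteratedDeriv 1 r x| := by
          ring
      _ ≤ S + S * B := by gcongr
      _ ≤ (1 + B) * S + P := by linarith
      _ ≤ _ := dominate (by linarith)

end ControlledRadius

lemma exists_abs_iteratedDeriv_inv_pow_le {N : ℕ} (hN : N ≠ 0) {U B : ℝ} (hU : 0 ≤ U) (hB : 0 ≤ B)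
    {i : ℕ} (hi : i ≤ N + 2) (n : ℕ) :
    ∃ C : ℝ, 0 ≤ C ∧ ∀ r, ControlledRadius U B N r → ∀ s ≤ i, ∀ x,
      |iteratedDeriv s (r⁻¹ ^ n) x| ≤ C * (1 + derivAbsSum r s x) := by
  induction i generalizing n with
  | zero =>
    refine ⟨U ^ n, by positivity, fun r hr s hs x => ?_⟩
    obtain rfl := Nat.le_zero.1 hs
    simpa [derivAbsSum] using hr.abs_inv_pow_le n x
  | succ m ih =>
    obtain ⟨C, hC, lower⟩ := ih (by omega) n
    obtain ⟨C', hC', lower'⟩ := ih (by omega) (n + 1)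
    refine ⟨max C (n * (2 ^ m * (C' * (1 + N * B + B)))), le_max_of_le_left hC,
      fun r hr s hs x => ?_⟩
    have sum_nonneg := derivAbsSum_nonneg r s x
    rcases Nat.le_succ_iff.1 hs with hs | rfl
    · exact (lower r hr s hs x).trans (by gcongr; exact le_max_left _ _)
    · refine (hr.abs_iteratedDeriv_succ_inv_pow_le_derivAbsSum hN hB hC' (by omega)
        fun s hs => lower' r hr s hs x).trans ?_
      gcongr
      · exact le_max_right _ _
      · linarith

lemma exists_abs_iteratedDeriv_inv_pow_le_derivAbsSum {N : ℕ} (hN : N ≠ 0) {U B : ℝ} (hU : 0 ≤ U)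
    (hB : 0 ≤ B) {i : ℕ} (hi0 : i ≠ 0) (hi : i ≤ N + 2) (n : ℕ) :
    ∃ C : ℝ, 0 ≤ C ∧ ∀ r, ControlledRadius U B N r → ∀ x,
      |iteratedDeriv i (r⁻¹ ^ n) x| ≤ C * derivAbsSum r i x := by
  obtain ⟨m, rfl⟩ := Nat.exists_eq_succ_of_ne_zero hi0
  obtain ⟨C, hC, lower⟩ := exists_abs_iteratedDeriv_inv_pow_le hN hU hB (i := m) (by omega) (n + 1)
  exact ⟨n * (2 ^ m * (C * (1 + N * B + B))), by positivity, fun r hr x =>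
    hr.abs_iteratedDeriv_succ_inv_pow_le_derivAbsSum hN hB hC (by omega)
      fun s hs => lower r hr s hs x⟩

lemma exists_abs_invPowCommutator_le {N : ℕ} (hN : N ≠ 0) {U B : ℝ} (hU : 0 ≤ U) (hB : 0 ≤ B)
    (n : ℕ) : ∃ C : ℝ, 0 ≤ C ∧ ∀ r, ControlledRadius U B N r → ∀ x,
      |invPowCommutator n (N + 2) r x| ≤ C * (derivAbsSum r (N + 2) x
        + |iteratedDeriv (N + 1) r x| * |iteratedDeriv 2 r x|) := by
  obtain ⟨C, hC, lower⟩ := exists_abs_iteratedDeriv_inv_pow_le hN hU hB le_rfl (n + 1)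
  refine ⟨n * (2 ^ (N + 2) * (C * (1 + N * B + B))), by positivity, fun r hr x => ?_⟩
  have sum_nonneg := derivAbsSum_nonneg r (N + 2) x
  refine (hr.abs_invPowCommutator_le hr.ne_zero
    (D := C * ((1 + N * B + B) * (derivAbsSum r (N + 2) x
      + |iteratedDeriv (N + 1) r x| * |iteratedDeriv 2 r x|))) (by positivity)
    fun s hs0 hs => ?_).trans_eq (by ring)
  calc |iteratedDeriv s (r⁻¹ ^ (n + 1)) x| * |iteratedDeriv (N + 2 + 1 - s) r x|
      ≤ C * (1 + derivAbsSum r s x) * |iteratedDeriv (N + 2 + 1 - s) r x| := by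
        gcongr; exact lower r hr s hs x
    _ = C * ((1 + derivAbsSum r s x) * |iteratedDeriv (N + 2 + 1 - s) r x|) := mul_assoc _ _ _
    _ ≤ _ := mul_le_mul_of_nonneg_left
        (hr.one_add_derivAbsSum_mul_le_of_ne_zero hN hB hs0 hs x) hC

/-! ### Energy estimates at higher order -/

lemma SmoothPeriodic.sq_iteratedDeriv_le_add {f : ℝ → ℝ} (hf : SmoothPeriodic f) {j : ℕ}
    (hj : j ≠ 0) {η : ℝ} (hη : 0 < η) (x : ℝ) :
    iteratedDeriv j f x ^ 2 ≤ η * derivEnergy (j + 1) f + η⁻¹ * derivEnergy j f := by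
  have := derivEnergy_nonneg j f
  have := derivEnergy_nonneg (j + 1) f
  refine (abs_le_of_sq_le_sq' ?_ (by positivity)).2
  have cross : η * derivEnergy (j + 1) f * (η⁻¹ * derivEnergy j f)
      = derivEnergy j f * derivEnergy (j + 1) f := by field_simp
  nlinarith [hf.pow_four_iteratedDeriv_le hj x,
    sq_nonneg (η * derivEnergy (j + 1) f - η⁻¹ * derivEnergy j f)]

lemma integral_sq_le_of_abs_le_mul_add {f g h : ℝ → ℝ} {C : ℝ} (hf : Continuous f)
    (hg : Continuous g) (hh : Continuous h) (le : ∀ x, |f x| ≤ C * (g x + h x)) :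
    ∫ x in 0..(2 * π), f x ^ 2
      ≤ 2 * C ^ 2 * ((∫ x in 0..(2 * π), g x ^ 2) + ∫ x in 0..(2 * π), h x ^ 2) := by
  rw [← intervalIntegral.integral_add ((by fun_prop : Continuous _).intervalIntegrable _ _)
    ((by fun_prop : Continuous _).intervalIntegrable _ _), ← intervalIntegral.integral_const_mul]
  refine integral_period_mono (by fun_prop) (by fun_prop) fun x => ?_
  calc f x ^ 2 = |f x| ^ 2 := (sq_abs _).symm
    _ ≤ (C * (g x + h x)) ^ 2 := by gcongr; exact le x
    _ = C ^ 2 * (g x + h x) ^ 2 := mul_pow _ _ _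
    _ ≤ C ^ 2 * (2 * (g x ^ 2 + h x ^ 2)) := by gcongr; exact add_sq_le
    _ = 2 * C ^ 2 * (g x ^ 2 + h x ^ 2) := by ring

lemma derivEnergy_le_sum (f : ℝ → ℝ) {j l : ℕ} (hj : j ≠ 0) (hjl : j ≤ l) :
    derivEnergy j f ≤ ∑ i ∈ Finset.Icc 1 l, derivEnergy i f :=
  Finset.single_le_sum (f := fun i => derivEnergy i f) (fun i _ => derivEnergy_nonneg i f)
    (Finset.mem_Icc.2 ⟨Nat.one_le_iff_ne_zero.2 hj, hjl⟩)

lemma sum_derivEnergy_nonneg (f : ℝ → ℝ) (l : ℕ) : 0 ≤ ∑ j ∈ Finset.Icc 1 l, derivEnergy j f :=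
  Finset.sum_nonneg fun j _ => derivEnergy_nonneg j f

lemma BoundedCurvature.controlledRadius {U A : ℝ} {N : ℕ} {r : ℝ → ℝ} (hr : BoundedCurvature U r)
    (h : ∀ j, j ≠ 0 → j ≤ N + 1 → derivEnergy j r ≤ A) :
    ControlledRadius U √(2 * π * A) N r where
  toBoundedCurvature := hr
  abs_iteratedDeriv_le j hj hjN x := by
    refine Real.abs_le_sqrt ((hr.sq_iteratedDeriv_le hj x).trans ?_)
    gcongr
    exact h (j + 1) j.succ_ne_zero (by omega)

section

variable {A U : ℝ}

lemma exists_derivEnergy_two_inv_pow_le (hA : 0 ≤ A) (hU : 0 ≤ U) (n : ℕ) :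
    ∃ K : ℝ, 0 ≤ K ∧ ∀ r, BoundedCurvature U r → derivEnergy 1 r ≤ A →
      derivEnergy 2 (r⁻¹ ^ n) ≤ K * ∑ j ∈ Finset.Icc 1 2, derivEnergy j r := by
  obtain ⟨C, -, second_le⟩ := exists_abs_iteratedDeriv_two_inv_pow_le hU n
  refine ⟨2 * C ^ 2 * (1 + 2 * π * A), by positivity, fun r hr energy_le => ?_⟩
  have cont (j : ℕ) := hr.continuous_iteratedDeriv j
  have energy_nonneg := derivEnergy_nonneg 2 r
  have quartic_le : ∫ x in 0..(2 * π), (|iteratedDeriv 1 r x| ^ 2) ^ 2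
      ≤ 2 * π * derivEnergy 2 r * derivEnergy 1 r := by
    rw [derivEnergy.eq_1 1, ← intervalIntegral.integral_const_mul]
    refine integral_period_mono (by fun_prop) (by fun_prop) fun x => ?_
    rw [sq_abs, sq (iteratedDeriv 1 r x ^ 2)]
    gcongr
    exact hr.sq_iteratedDeriv_le one_ne_zero x
  calc derivEnergy 2 (r⁻¹ ^ n)
      ≤ 2 * C ^ 2 * ((∫ x in 0..(2 * π), |iteratedDeriv 2 r x| ^ 2)
          + ∫ x in 0..(2 * π), (|iteratedDeriv 1 r x| ^ 2) ^ 2) :=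
        integral_sq_le_of_abs_le_mul_add
          ((hr.inv_pow hr.ne_zero n).continuous_iteratedDeriv 2) (by fun_prop) (by fun_prop)
          (second_le r hr)
    _ ≤ 2 * C ^ 2 * (derivEnergy 2 r + 2 * π * derivEnergy 2 r * A) := by
        simp only [sq_abs (iteratedDeriv 2 r _), ← derivEnergy.eq_1]
        gcongr
        exact quartic_le.trans (by gcongr)
    _ = 2 * C ^ 2 * (1 + 2 * π * A) * derivEnergy 2 r := by ring
    _ ≤ _ := by gcongr; exact derivEnergy_le_sum r two_ne_zero le_rfl

lemma exists_derivEnergy_inv_pow_le (hA : 0 ≤ A) (hU : 0 ≤ U) (n : ℕ) {l : ℕ} (hl : 2 ≤ l) :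
    ∃ K : ℝ, 0 ≤ K ∧ ∀ r, BoundedCurvature U r → (∀ j, j ≠ 0 → j < l → derivEnergy j r ≤ A) →
      derivEnergy l (r⁻¹ ^ n) ≤ K * ∑ j ∈ Finset.Icc 1 l, derivEnergy j r := by
  obtain ⟨N, rfl⟩ := Nat.exists_eq_add_of_le' hl
  rcases eq_or_ne N 0 with rfl | hN
  · obtain ⟨K, hK, le⟩ := exists_derivEnergy_two_inv_pow_le hA hU n
    exact ⟨K, hK, fun r hr h => le r hr (h 1 one_ne_zero one_lt_two)⟩
  · obtain ⟨C, -, le⟩ := exists_abs_iteratedDeriv_inv_pow_le_derivAbsSum hN hU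
      (Real.sqrt_nonneg (2 * π * A)) (i := N + 2) (by omega) le_rfl n
    refine ⟨2 * C ^ 2 * (N + 2 : ℕ), by positivity, fun r hr h => ?_⟩
    have bound := integral_sq_le_of_abs_le_mul_add
      ((hr.inv_pow hr.ne_zero n).continuous_iteratedDeriv (N + 2))
      (hr.continuous_derivAbsSum (N + 2)) (continuous_const (y := 0)) (C := C) fun x => by
        simpa using le r (hr.controlledRadius fun j hj hjN => h j hj (by omega)) x
    rw [mul_assoc]
    refine bound.trans (mul_le_mul_of_nonneg_left ?_ (by positivity))
    simpa using hr.integral_sq_derivAbsSum_le (N + 2)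

lemma exists_integral_sq_invPowCommutator_two_le (hA : 0 ≤ A) (hU : 0 ≤ U) (n : ℕ)
    {η : ℝ} (hη : 0 < η) :
    ∃ K : ℝ, 0 ≤ K ∧ ∀ r, BoundedCurvature U r → derivEnergy 1 r ≤ A →
      ∫ x in 0..(2 * π), invPowCommutator n 2 r x ^ 2
        ≤ η * derivEnergy 3 r + K * ∑ j ∈ Finset.Icc 1 2, derivEnergy j r := by
  obtain ⟨C, -, commutator_le⟩ := exists_abs_invPowCommutator_two_le hU n
  set ε := η / (2 * C ^ 2 * A + 1) with hε
  have hε0 : 0 < ε := by positivity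
  refine ⟨2 * C ^ 2 * (ε⁻¹ + 4 * A) * A, by positivity, fun r hr energy_le => ?_⟩
  have cont (j : ℕ) := hr.continuous_iteratedDeriv j
  have h1 := derivEnergy_nonneg 1 r
  have h2 := derivEnergy_nonneg 2 r
  have h3 := derivEnergy_nonneg 3 r
  have mixed_le : ∫ x in 0..(2 * π), (|iteratedDeriv 1 r x| * |iteratedDeriv 2 r x|) ^ 2
      ≤ (ε * derivEnergy 3 r + ε⁻¹ * derivEnergy 2 r) * derivEnergy 1 r := by
    rw [derivEnergy.eq_1 1, ← intervalIntegral.integral_const_mul]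
    refine integral_period_mono (by fun_prop) (by fun_prop) fun x => ?_
    rw [mul_pow, sq_abs, sq_abs, mul_comm]
    gcongr
    exact hr.sq_iteratedDeriv_le_add two_ne_zero hε0 x
  have sextic_le : ∫ x in 0..(2 * π), (|iteratedDeriv 1 r x| ^ 3) ^ 2
      ≤ 4 * derivEnergy 1 r * derivEnergy 2 r * derivEnergy 1 r := by
    rw [derivEnergy.eq_1 1, ← intervalIntegral.integral_const_mul]
    refine integral_period_mono (by fun_prop) (by fun_prop) fun x => ?_
    rw [← pow_mul, mul_comm 3, pow_mul, sq_abs, pow_succ, ← pow_mul]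
    gcongr
    exact hr.pow_four_iteratedDeriv_le one_ne_zero x
  have absorb : 2 * C ^ 2 * A * ε ≤ η := by
    rw [hε, mul_div_assoc', div_le_iff₀ (by positivity)]
    nlinarith
  calc ∫ x in 0..(2 * π), invPowCommutator n 2 r x ^ 2
      ≤ 2 * C ^ 2 * ((∫ x in 0..(2 * π), (|iteratedDeriv 1 r x| * |iteratedDeriv 2 r x|) ^ 2)
          + ∫ x in 0..(2 * π), (|iteratedDeriv 1 r x| ^ 3) ^ 2) :=
        integral_sq_le_of_abs_le_mul_add (hr.continuous_invPowCommutator hr.ne_zero n 2)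
          (by fun_prop) (by fun_prop) (commutator_le r hr)
    _ ≤ 2 * C ^ 2 * ((ε * derivEnergy 3 r + ε⁻¹ * derivEnergy 2 r) * A
          + 4 * A * derivEnergy 2 r * A) := by
        gcongr
        · exact mixed_le.trans (by gcongr)
        · exact sextic_le.trans (by gcongr)
    _ = 2 * C ^ 2 * A * ε * derivEnergy 3 r
          + 2 * C ^ 2 * (ε⁻¹ + 4 * A) * A * derivEnergy 2 r := by ring
    _ ≤ _ := by gcongr; exact derivEnergy_le_sum r two_ne_zero le_rfl

lemma exists_integral_sq_invPowCommutator_le_sum (hA : 0 ≤ A) (hU : 0 ≤ U) (n : ℕ)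
    {N : ℕ} (hN : N ≠ 0) :
    ∃ K : ℝ, 0 ≤ K ∧ ∀ r, BoundedCurvature U r →
      (∀ j, j ≠ 0 → j < N + 2 → derivEnergy j r ≤ A) →
      ∫ x in 0..(2 * π), invPowCommutator n (N + 2) r x ^ 2
        ≤ K * ∑ j ∈ Finset.Icc 1 (N + 2), derivEnergy j r := by
  obtain ⟨C, -, commutator_le⟩ := exists_abs_invPowCommutator_le hN hU
    (Real.sqrt_nonneg (2 * π * A)) n
  refine ⟨2 * C ^ 2 * ((N + 2 : ℕ) + 2 * π * A), by positivity, fun r hr h => ?_⟩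
  have cont (j : ℕ) := hr.continuous_iteratedDeriv j
  have sum_nonneg := sum_derivEnergy_nonneg r (N + 2)
  have second_nonneg := derivEnergy_nonneg 2 r
  have := derivEnergy_nonneg (N + 2) r
  have mixed_le : ∫ x in 0..(2 * π), (|iteratedDeriv (N + 1) r x| * |iteratedDeriv 2 r x|) ^ 2
      ≤ 2 * π * derivEnergy (N + 2) r * derivEnergy 2 r := by
    rw [derivEnergy.eq_1 2, ← intervalIntegral.integral_const_mul]
    refine integral_period_mono (by fun_prop) (by fun_prop) fun x => ?_
    rw [mul_pow, sq_abs, sq_abs]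
    gcongr
    exact hr.sq_iteratedDeriv_le N.succ_ne_zero x
  calc ∫ x in 0..(2 * π), invPowCommutator n (N + 2) r x ^ 2
      ≤ 2 * C ^ 2 * ((∫ x in 0..(2 * π), derivAbsSum r (N + 2) x ^ 2)
          + ∫ x in 0..(2 * π), (|iteratedDeriv (N + 1) r x| * |iteratedDeriv 2 r x|) ^ 2) :=
        integral_sq_le_of_abs_le_mul_add (hr.continuous_invPowCommutator hr.ne_zero n _)
          (hr.continuous_derivAbsSum _) (by fun_prop)
          (commutator_le r (hr.controlledRadius fun j hj hjN => h j hj (by omega)))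
    _ ≤ 2 * C ^ 2 * ((N + 2 : ℕ) * ∑ j ∈ Finset.Icc 1 (N + 2), derivEnergy j r
          + 2 * π * (∑ j ∈ Finset.Icc 1 (N + 2), derivEnergy j r) * A) := by
        gcongr
        · exact hr.integral_sq_derivAbsSum_le _
        · refine mixed_le.trans ?_
          gcongr
          · exact derivEnergy_le_sum r (by omega) le_rfl
          · exact h 2 two_ne_zero (by omega)
    _ = _ := by ring

lemma exists_integral_sq_invPowCommutator_le (hA : 0 ≤ A) (hU : 0 ≤ U) (n : ℕ)
    {l : ℕ} (hl : 2 ≤ l) {η : ℝ} (hη : 0 < η) :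
    ∃ K : ℝ, 0 ≤ K ∧ ∀ r, BoundedCurvature U r → (∀ j, j ≠ 0 → j < l → derivEnergy j r ≤ A) →
      ∫ x in 0..(2 * π), invPowCommutator n l r x ^ 2
        ≤ η * derivEnergy (l + 1) r + K * ∑ j ∈ Finset.Icc 1 l, derivEnergy j r := by
  obtain ⟨N, rfl⟩ := Nat.exists_eq_add_of_le' hl
  rcases eq_or_ne N 0 with rfl | hN
  · obtain ⟨K, hK, le⟩ := exists_integral_sq_invPowCommutator_two_le hA hU n hη
    exact ⟨K, hK, fun r hr h => le r hr (h 1 one_ne_zero one_lt_two)⟩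
  · obtain ⟨K, hK, le⟩ := exists_integral_sq_invPowCommutator_le_sum hA hU n hN
    exact ⟨K, hK, fun r hr h => (le r hr h).trans <|
      le_add_of_nonneg_left (mul_nonneg hη.le (derivEnergy_nonneg _ r))⟩

end

/-- The time derivative of `derivEnergy l r` along `∂r/∂τ = r - ∂²(r⁻ᵖ) - r⁻ᵖ`, with one derivative
moved by parts in the second-order term. -/
noncomputable def energyRate (p l : ℕ) (r : ℝ → ℝ) : ℝ :=
  2 * derivEnergy l r
    + 2 * (∫ x in 0..(2 * π), iteratedDeriv (l + 1) r x * iteratedDeriv (l + 1) (r⁻¹ ^ p) x)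
    - 2 * ∫ x in 0..(2 * π), iteratedDeriv l r x * iteratedDeriv l (r⁻¹ ^ p) x

namespace SmoothPeriodic

variable {r : ℝ → ℝ}

lemma two_mul_integral_iteratedDeriv_succ_le (hr : SmoothPeriodic r) {a : ℝ} (ha : 0 < a)
    {p : ℕ} (l : ℕ) (ne_zero : ∀ x, r x ≠ 0) (coercive : ∀ x, a ≤ p * (r⁻¹ ^ (p + 1)) x) :
    2 * (∫ x in 0..(2 * π), iteratedDeriv (l + 1) r x * iteratedDeriv (l + 1) (r⁻¹ ^ p) x)
      ≤ -(3 / 2 * a) * derivEnergy (l + 1) r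
        + 2 / a * ∫ x in 0..(2 * π), invPowCommutator p l r x ^ 2 := by
  have h₁ := hr.continuous_iteratedDeriv (l + 1)
  have h₂ := (hr.inv_pow ne_zero p).continuous_iteratedDeriv (l + 1)
  have h₃ := hr.continuous_invPowCommutator ne_zero p l
  rw [derivEnergy, ← intervalIntegral.integral_const_mul, ← intervalIntegral.integral_const_mul,
    ← intervalIntegral.integral_const_mul,
    ← intervalIntegral.integral_add ((by fun_prop : Continuous _).intervalIntegrable _ _)
      ((by fun_prop : Continuous _).intervalIntegrable _ _)]
  refine integral_period_mono (by fun_prop) (by fun_prop) fun x => ?_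
  have leading : iteratedDeriv (l + 1) (r⁻¹ ^ p) x = invPowCommutator p l r x
      - p * (r⁻¹ ^ (p + 1)) x * iteratedDeriv (l + 1) r x := by
    rw [invPowCommutator]; ring
  rw [leading]
  set y := iteratedDeriv (l + 1) r x
  set z := invPowCommutator p l r x
  have young : 2 * (y * z) ≤ a / 2 * y ^ 2 + 2 / a * z ^ 2 := by
    have square : a / 2 * y ^ 2 + 2 / a * z ^ 2 - 2 * (y * z) = 2 / a * (a / 2 * y - z) ^ 2 := by
      field_simp; ring
    linarith [show 0 ≤ 2 / a * (a / 2 * y - z) ^ 2 by positivity]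
  nlinarith [mul_le_mul_of_nonneg_right (coercive x) (sq_nonneg y)]

lemma neg_derivEnergy_add_le (hr : SmoothPeriodic r) {v : ℝ → ℝ} (hv : SmoothPeriodic v) (l : ℕ) :
    -(derivEnergy l r + derivEnergy l v)
      ≤ 2 * ∫ x in 0..(2 * π), iteratedDeriv l r x * iteratedDeriv l v x := by
  have h₁ := hr.continuous_iteratedDeriv l
  have h₂ := hv.continuous_iteratedDeriv l
  rw [derivEnergy, derivEnergy, ← intervalIntegral.integral_const_mul,
    ← intervalIntegral.integral_add ((by fun_prop : Continuous _).intervalIntegrable _ _)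
      ((by fun_prop : Continuous _).intervalIntegrable _ _), ← intervalIntegral.integral_neg]
  refine integral_period_mono (by fun_prop) (by fun_prop) fun x => ?_
  nlinarith [sq_nonneg (iteratedDeriv l r x + iteratedDeriv l v x)]

lemma energyRate_le (hr : SmoothPeriodic r) {a : ℝ} (ha : 0 < a) {p : ℕ} (l : ℕ)
    (ne_zero : ∀ x, r x ≠ 0) (coercive : ∀ x, a ≤ p * (r⁻¹ ^ (p + 1)) x) :
    energyRate p l r ≤ -(3 / 2 * a) * derivEnergy (l + 1) r + 3 * derivEnergy l r
      + 2 / a * (∫ x in 0..(2 * π), invPowCommutator p l r x ^ 2) + derivEnergy l (r⁻¹ ^ p) := by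
  have second_order := hr.two_mul_integral_iteratedDeriv_succ_le ha l ne_zero coercive
  have zeroth_order := hr.neg_derivEnergy_add_le (hr.inv_pow ne_zero p) l
  rw [energyRate]
  linarith

end SmoothPeriodic

lemma exists_energyRate_le {l p : ℕ} (hl : 2 ≤ l) (hp : p ≠ 0) {A b U K : ℝ} (hA : 0 ≤ A)
    (hb : 0 < b) (hU : 0 ≤ U) (hK : 0 ≤ K) :
    ∃ C : ℝ, 0 ≤ C ∧ ∀ r, BoundedCurvature U r → (∀ x, b ≤ (r x)⁻¹) →
      (∀ j, j ≠ 0 → j < l → derivEnergy j r ≤ A) →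
      energyRate p l r ≤ -K * derivEnergy l r + C * derivEnergy 1 r := by
  set a : ℝ := p * b ^ (p + 1) with ha
  have ha0 : 0 < a := by positivity
  obtain ⟨K₁, hK₁, commutator_le⟩ := exists_integral_sq_invPowCommutator_le hA hU p hl
    (η := a ^ 2 / 4) (by positivity)
  obtain ⟨K₂, hK₂, power_le⟩ := exists_derivEnergy_inv_pow_le hA hU p hl
  set G := 3 + K + 2 / a * K₁ + K₂ with hG
  have hG0 : 0 < G := by positivity
  obtain ⟨C, hC, interpolation⟩ := exists_sum_derivEnergy_le l (η := a / G) (by positivity)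
  refine ⟨G * C, by positivity, fun r hr curvature_ge energy_le => ?_⟩
  set S := ∑ j ∈ Finset.Icc 1 l, derivEnergy j r
  have rate_le := hr.energyRate_le ha0 (p := p) l hr.ne_zero fun x => by
    rw [ha, Pi.pow_apply, Pi.inv_apply]
    gcongr
    exact curvature_ge x
  have commutator_le' : 2 / a * (∫ x in 0..(2 * π), invPowCommutator p l r x ^ 2)
      ≤ a / 2 * derivEnergy (l + 1) r + 2 / a * K₁ * S :=
    (mul_le_mul_of_nonneg_left (commutator_le r hr energy_le) (by positivity)).trans_eq
      (by field_simp; ring)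
  have interpolation' : G * S ≤ a * derivEnergy (l + 1) r + G * C * derivEnergy 1 r :=
    (mul_le_mul_of_nonneg_left (interpolation r hr.toSmoothPeriodic) hG0.le).trans_eq
      (by field_simp)
  have top_le : (3 + K) * derivEnergy l r ≤ (3 + K) * S := by
    gcongr; exact derivEnergy_le_sum r (by omega) le_rfl
  have := power_le r hr energy_le
  rw [hG] at interpolation'
  linarith

/-! ### Functions smooth in space and time -/

/-- Joint smoothness of `f θ τ` on `ℝ × [0, ∞)`, one-sided at the initial time. -/
def SmoothSpaceTime (f : ℝ → ℝ → ℝ) : Prop :=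
  ContDiffOn ℝ (⊤ : ℕ∞) (fun q : ℝ × ℝ => f q.1 q.2) (univ ×ˢ Ici 0)

namespace SmoothSpaceTime

variable {f : ℝ → ℝ → ℝ}

lemma contDiff_slice (hf : SmoothSpaceTime f) {τ : ℝ} (hτ : 0 ≤ τ) :
    ContDiff ℝ (⊤ : ℕ∞) fun x => f x τ := by
  have embedding : ContDiff ℝ (⊤ : ℕ∞) fun x : ℝ => (x, τ) := by fun_prop
  exact contDiffOn_univ.1
    (ContDiffOn.comp (s := univ) hf embedding.contDiffOn fun x _ => ⟨mem_univ x, hτ⟩)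

lemma hasDerivAt_space (hf : SmoothSpaceTime f) (θ : ℝ) {τ : ℝ} (hτ : 0 ≤ τ) :
    HasDerivAt (fun x => f x τ)
      (fderivWithin ℝ (fun q : ℝ × ℝ => f q.1 q.2) (univ ×ˢ Ici 0) (θ, τ) (1, 0)) θ := by
  have differentiable := (hf.differentiableOn (by simp) (θ, τ) ⟨mem_univ θ, hτ⟩).hasFDerivWithinAt
  have embedding : HasDerivWithinAt (fun x : ℝ => (x, τ)) ((1 : ℝ), (0 : ℝ)) univ θ :=
    ((hasDerivAt_id θ).prodMk (hasDerivAt_const θ τ)).hasDerivWithinAt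
  exact hasDerivWithinAt_univ.1 <|
    HasFDerivWithinAt.comp_hasDerivWithinAt (x := θ) (f := fun x : ℝ => (x, τ))
      differentiable embedding fun x _ => ⟨mem_univ x, hτ⟩

protected lemma deriv (hf : SmoothSpaceTime f) :
    SmoothSpaceTime fun θ τ => deriv (fun x => f x τ) θ := by
  have smooth_fderiv := ContDiffOn.fderivWithin hf
    (uniqueDiffOn_univ.prod (uniqueDiffOn_Ici (0 : ℝ))) (m := (⊤ : ℕ∞)) (by simp)
  refine (smooth_fderiv.clm_apply (contDiffOn_const (c := ((1 : ℝ), (0 : ℝ))))).congr ?_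
  rintro ⟨θ, τ⟩ ⟨-, hτ⟩
  exact (hf.hasDerivAt_space θ hτ).deriv

protected lemma iteratedDeriv (hf : SmoothSpaceTime f) (j : ℕ) :
    SmoothSpaceTime fun θ τ => iteratedDeriv j (fun x => f x τ) θ := by
  induction j with
  | zero => simpa only [iteratedDeriv_zero] using hf
  | succ n ih => simpa only [iteratedDeriv_succ] using ih.deriv

protected lemma pow (hf : SmoothSpaceTime f) (n : ℕ) : SmoothSpaceTime fun θ τ => f θ τ ^ n :=
  ContDiffOn.pow hf n

protected lemma inv (hf : SmoothSpaceTime f) (ne_zero : ∀ θ τ, 0 ≤ τ → f θ τ ≠ 0) :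
    SmoothSpaceTime fun θ τ => (f θ τ)⁻¹ :=
  ContDiffOn.inv hf fun q hq => ne_zero q.1 q.2 hq.2

lemma contDiffAt (hf : SmoothSpaceTime f) (θ : ℝ) {τ : ℝ} (hτ : 0 < τ) :
    ContDiffAt ℝ (⊤ : ℕ∞) (fun q : ℝ × ℝ => f q.1 q.2) (θ, τ) :=
  ContDiffOn.contDiffAt hf (prod_mem_nhds univ_mem (Ici_mem_nhds hτ))

lemma hasDerivAt_time (hf : SmoothSpaceTime f) (θ : ℝ) {τ : ℝ} (hτ : 0 < τ) :
    HasDerivAt (fun s => f θ s) (fderiv ℝ (fun q : ℝ × ℝ => f q.1 q.2) (θ, τ) (0, 1)) τ :=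
  HasFDerivAt.comp_hasDerivAt (x := τ) (f := fun s : ℝ => (θ, s))
    ((hf.contDiffAt θ hτ).differentiableAt (by simp)).hasFDerivAt
    ((hasDerivAt_const τ θ).prodMk (hasDerivAt_id τ))

lemma eq_fderiv (hf : SmoothSpaceTime f) {τ : ℝ} (hτ : 0 < τ) {g : ℝ → ℝ}
    (hg : ∀ θ, HasDerivAt (fun s => f θ s) (g θ) τ) :
    g = fun x => fderiv ℝ (fun q : ℝ × ℝ => f q.1 q.2) (x, τ) (0, 1) :=
  funext fun x => (hg x).unique (hf.hasDerivAt_time x hτ)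

lemma hasDerivAt_deriv (hf : SmoothSpaceTime f) {τ : ℝ} (hτ : 0 < τ) {g : ℝ → ℝ}
    (hg : ∀ θ, HasDerivAt (fun s => f θ s) (g θ) τ) (θ : ℝ) :
    HasDerivAt (fun s => deriv (fun x => f x s) θ) (deriv g θ) τ := by
  set F : ℝ × ℝ → ℝ := fun q => f q.1 q.2
  have second := (((hf.contDiffAt θ hτ).fderiv_right (m := 1) (by norm_cast)).differentiableAt
    (by simp)).hasFDerivAt
  have along_time : HasDerivAt (fun s => fderiv ℝ F (θ, s) (1, 0))
      (fderiv ℝ (fderiv ℝ F) (θ, τ) (0, 1) (1, 0)) τ := by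
    simpa using (HasFDerivAt.comp_hasDerivAt (x := τ) (f := fun s : ℝ => (θ, s)) second
      ((hasDerivAt_const τ θ).prodMk (hasDerivAt_id τ))).clm_apply
      (hasDerivAt_const τ ((1 : ℝ), (0 : ℝ)))
  have along_space : HasDerivAt (fun x => fderiv ℝ F (x, τ) (0, 1))
      (fderiv ℝ (fderiv ℝ F) (θ, τ) (1, 0) (0, 1)) θ := by
    simpa using (HasFDerivAt.comp_hasDerivAt (x := θ) (f := fun x : ℝ => (x, τ)) second
      ((hasDerivAt_id θ).prodMk (hasDerivAt_const θ τ))).clm_apply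
      (hasDerivAt_const θ ((0 : ℝ), (1 : ℝ)))
  have symmetric : IsSymmSndFDerivAt ℝ F (θ, τ) :=
    (hf.contDiffAt θ hτ).isSymmSndFDerivAt (by simp; norm_cast)
  rw [hf.eq_fderiv hτ hg, along_space.deriv, symmetric.eq]
  refine along_time.congr_of_eventuallyEq ?_
  filter_upwards [Ioi_mem_nhds hτ] with s hs
  rw [(hf.hasDerivAt_space θ (mem_Ioi.1 hs).le).deriv,
    fderivWithin_of_mem_nhds (prod_mem_nhds univ_mem (Ici_mem_nhds hs))]

lemma hasDerivAt_iteratedDeriv (hf : SmoothSpaceTime f) {τ : ℝ} (hτ : 0 < τ) {g : ℝ → ℝ}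
    (hg : ∀ θ, HasDerivAt (fun s => f θ s) (g θ) τ) (j : ℕ) (θ : ℝ) :
    HasDerivAt (fun s => iteratedDeriv j (fun x => f x s) θ) (iteratedDeriv j g θ) τ := by
  induction j generalizing θ with
  | zero => simpa only [iteratedDeriv_zero] using hg θ
  | succ n ih => simpa only [iteratedDeriv_succ] using (hf.iteratedDeriv n).hasDerivAt_deriv hτ ih θ

lemma continuousOn_fderiv (hf : SmoothSpaceTime f) :
    ContinuousOn (fun q => fderiv ℝ (fun q : ℝ × ℝ => f q.1 q.2) q (0, 1)) (univ ×ˢ Ioi 0) := by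
  intro q hq
  have : ContinuousAt (fderiv ℝ fun q : ℝ × ℝ => f q.1 q.2) q :=
    ((hf.contDiffAt q.1 hq.2).fderiv_right (m := 1) (by norm_cast)).continuousAt
  exact (this.clm_apply continuousAt_const).continuousWithinAt

lemma hasDerivAt_integral (hf : SmoothSpaceTime f) {τ : ℝ} (hτ : 0 < τ) {g : ℝ → ℝ}
    (hg : ∀ θ, HasDerivAt (fun s => f θ s) (g θ) τ) :
    HasDerivAt (fun s => ∫ θ in 0..(2 * π), f θ s) (∫ θ in 0..(2 * π), g θ) τ := by
  obtain ⟨M, hM⟩ := (isCompact_Icc (a := 0) (b := 2 * π)).prod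
    (isCompact_Icc (a := τ / 2) (b := 2 * τ)) |>.exists_bound_of_continuousOn <|
    hf.continuousOn_fderiv.mono fun q hq => ⟨mem_univ _, (half_pos hτ).trans_le hq.2.1⟩
  rw [hf.eq_fderiv hτ hg]
  refine (intervalIntegral.hasDerivAt_integral_of_dominated_loc_of_deriv_le
    (F := fun s θ => f θ s)
    (F' := fun s θ => fderiv ℝ (fun q : ℝ × ℝ => f q.1 q.2) (θ, s) (0, 1))
    (bound := fun _ => M) (s := Ioo (τ / 2) (2 * τ)) (Ioo_mem_nhds (by linarith) (by linarith))
    ?_ ((hf.contDiff_slice hτ.le).continuous.intervalIntegrable _ _) ?_ ?_ (by simp) ?_).2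
  · filter_upwards [Ioi_mem_nhds hτ] with s hs
    exact (hf.contDiff_slice (mem_Ioi.1 hs).le).continuous.aestronglyMeasurable
  · exact (hf.continuousOn_fderiv.comp_continuous (f := fun x : ℝ => (x, τ)) (by fun_prop)
      fun x => ⟨mem_univ x, hτ⟩).aestronglyMeasurable
  · refine Eventually.of_forall fun x hx s hs => ?_
    rw [uIoc_of_le two_pi_nonneg] at hx
    exact hM (x, s) ⟨⟨hx.1.le, hx.2⟩, hs.1.le, hs.2.le⟩
  · exact Eventually.of_forall fun x _ s hs =>
      hf.hasDerivAt_time x ((half_pos hτ).trans hs.1)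

lemma continuousOn_integral (hf : SmoothSpaceTime f) :
    ContinuousOn (fun s => ∫ θ in 0..(2 * π), f θ s) (Ici 0) := by
  have extension : Continuous fun q : ℝ × ℝ => f q.2 (max q.1 0) :=
    (ContDiffOn.continuousOn hf).comp_continuous (f := fun q : ℝ × ℝ => (q.2, max q.1 0))
      (by fun_prop) fun q => ⟨mem_univ _, le_max_right q.1 0⟩
  have continuous_integral : Continuous fun s => ∫ θ in 0..(2 * π), f θ (max s 0) :=
    intervalIntegral.continuous_parametric_intervalIntegral_of_continuous' extension _ _
  refine continuous_integral.continuousOn.congr fun s hs => ?_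
  simp only [max_eq_left (mem_Ici.1 hs)]

end SmoothSpaceTime

/-! ### Nearly round profiles -/

lemma abs_inv_pow_sub_inv_pow_le (n : ℕ) {x m δ : ℝ} (hm : 0 < m) (hδ : δ ≤ 1 / 2)
    (h : |x - m| ≤ δ * m) : |x⁻¹ ^ n - m⁻¹ ^ n| ≤ n * 2 ^ n * δ * m⁻¹ ^ n := by
  have half_le : m / 2 ≤ x := by nlinarith [abs_le.1 h]
  have hx : 0 < x := by linarith
  have inv_le : x⁻¹ ≤ 2 * m⁻¹ := by
    rw [← div_eq_mul_inv, ← inv_div]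
    exact inv_anti₀ (by positivity) half_le
  have hδ0 : 0 ≤ δ := nonneg_of_mul_nonneg_left ((abs_nonneg _).trans h) hm
  have inv_sub_le : |x⁻¹ - m⁻¹| ≤ 2 * δ * m⁻¹ :=
    calc |x⁻¹ - m⁻¹| = |x - m| * (x⁻¹ * m⁻¹) := by
          rw [inv_sub_inv hx.ne' hm.ne', abs_div, abs_sub_comm, abs_of_pos (mul_pos hx hm),
            div_eq_mul_inv, mul_inv]
      _ ≤ δ * m * (2 * m⁻¹ * m⁻¹) := by gcongr
      _ = 2 * δ * m⁻¹ := by field_simp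
  have max_le : max |x⁻¹| |m⁻¹| ≤ 2 * m⁻¹ := by
    rw [abs_of_pos (inv_pos.2 hx), abs_of_pos (inv_pos.2 hm)]
    exact max_le inv_le (by linarith [inv_pos.2 hm])
  rcases n with _ | n
  · simp
  · calc |x⁻¹ ^ (n + 1) - m⁻¹ ^ (n + 1)|
        ≤ |x⁻¹ - m⁻¹| * (n + 1 : ℕ) * max |x⁻¹| |m⁻¹| ^ n := abs_pow_sub_pow_le _ _ _
      _ ≤ 2 * δ * m⁻¹ * (n + 1 : ℕ) * (2 * m⁻¹) ^ n := by gcongr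
      _ = _ := by ring

lemma SmoothPeriodic.invPowCommutator_one {r : ℝ → ℝ} (hr : SmoothPeriodic r)
    (ne_zero : ∀ x, r x ≠ 0) (n : ℕ) (x : ℝ) :
    invPowCommutator n 1 r x = n * (n + 1) * ((r⁻¹ ^ (n + 2)) x * iteratedDeriv 1 r x ^ 2) := by
  simp only [invPowCommutator, hr.iteratedDeriv_succ_inv_pow ne_zero, Finset.sum_range_succ,
    Finset.sum_range_zero, iteratedDeriv_zero, iteratedDeriv_one, zero_add,
    Nat.choose_zero_right, Nat.choose_self, Nat.sub_zero, Nat.add_sub_cancel]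
  push_cast
  ring

lemma SmoothPeriodic.integral_sq_mul_abs_le {f : ℝ → ℝ} (hf : SmoothPeriodic f) {d : ℝ}
    (hd : 0 ≤ d) (h : 2 * π * derivEnergy 1 f ≤ d ^ 2) :
    ∫ x in 0..(2 * π), iteratedDeriv 1 f x ^ 2 * |iteratedDeriv 2 f x| ≤ d * derivEnergy 2 f := by
  have h₁ := hf.continuous_iteratedDeriv 1
  have h₂ := hf.continuous_iteratedDeriv 2
  have energy_nonneg := derivEnergy_nonneg 2 f
  have cauchy_schwarz := sq_intervalIntegral_mul_le two_pi_nonneg h₁.abs h₂.abs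
  simp only [sq_abs, ← derivEnergy.eq_1] at cauchy_schwarz
  have extract_sup : ∫ x in 0..(2 * π), iteratedDeriv 1 f x ^ 2 * |iteratedDeriv 2 f x|
      ≤ √(2 * π * derivEnergy 2 f)
        * ∫ x in 0..(2 * π), |iteratedDeriv 1 f x| * |iteratedDeriv 2 f x| := by
    rw [← intervalIntegral.integral_const_mul]
    refine integral_period_mono (by fun_prop) (by fun_prop) fun x => ?_
    rw [← sq_abs, sq, mul_assoc]
    gcongr
    exact Real.abs_le_sqrt (hf.sq_iteratedDeriv_le one_ne_zero x)
  refine extract_sup.trans (abs_le_of_sq_le_sq' ?_ (by positivity)).2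
  rw [mul_pow, Real.sq_sqrt (by positivity)]
  calc 2 * π * derivEnergy 2 f * _
      ≤ 2 * π * derivEnergy 2 f * (derivEnergy 1 f * derivEnergy 2 f) :=
        mul_le_mul_of_nonneg_left cauchy_schwarz (by positivity)
    _ = 2 * π * derivEnergy 1 f * derivEnergy 2 f ^ 2 := by ring
    _ ≤ d ^ 2 * derivEnergy 2 f ^ 2 := by gcongr
    _ = (d * derivEnergy 2 f) ^ 2 := by ring

/-- A radius of curvature `r` of a closed curve (so that its modes `±1` vanish) whose Dirichlet
energy keeps it within relative distance `δ` of its mean. -/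
structure NearlyRound (δ : ℝ) (r : ℝ → ℝ) : Prop extends SmoothPeriodic r where
  pos : ∀ x, 0 < r x
  fCoeff_one : fCoeff r 1 = 0
  fCoeff_neg_one : fCoeff r (-1) = 0
  nonneg : 0 ≤ δ
  le_half : δ ≤ 1 / 2
  energy_le : 2 * π * derivEnergy 1 r ≤ (δ * periodMean r) ^ 2

/-- The time derivative of the mean along `∂r/∂τ = r - ∂²(r⁻ᵖ) - r⁻ᵖ`. -/
noncomputable def meanRate (p : ℕ) (r : ℝ → ℝ) : ℝ := periodMean r - periodMean (r⁻¹ ^ p)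

namespace NearlyRound

variable {δ : ℝ} {r : ℝ → ℝ}

lemma ne_zero (hr : NearlyRound δ r) (x : ℝ) : r x ≠ 0 := (hr.pos x).ne'

lemma periodMean_pos (hr : NearlyRound δ r) : 0 < periodMean r :=
  _root_.periodMean_pos hr.continuous hr.pos

lemma abs_sub_periodMean_le (hr : NearlyRound δ r) (x : ℝ) :
    |r x - periodMean r| ≤ δ * periodMean r :=
  hr.toSmoothPeriodic.abs_sub_periodMean_le (mul_nonneg hr.nonneg hr.periodMean_pos.le)
    hr.energy_le x

lemma abs_inv_pow_sub_le (hr : NearlyRound δ r) (n : ℕ) (x : ℝ) :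
    |(r⁻¹ ^ n) x - (periodMean r)⁻¹ ^ n| ≤ n * 2 ^ n * δ * (periodMean r)⁻¹ ^ n :=
  abs_inv_pow_sub_inv_pow_le n hr.periodMean_pos hr.le_half (hr.abs_sub_periodMean_le x)

lemma inv_pow_le (hr : NearlyRound δ r) (n : ℕ) (x : ℝ) :
    (r⁻¹ ^ n) x ≤ (1 + n * 2 ^ n) * (periodMean r)⁻¹ ^ n := by
  have mean_pos := hr.periodMean_pos
  have close := (abs_le.1 (hr.abs_inv_pow_sub_le n x)).2
  have : n * 2 ^ n * δ * (periodMean r)⁻¹ ^ n ≤ n * 2 ^ n * 1 * (periodMean r)⁻¹ ^ n := by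
    gcongr
    linarith [hr.le_half]
  linarith

lemma abs_meanRate_sub_le (hr : NearlyRound δ r) (p : ℕ) :
    |meanRate p r - periodMean r * (1 - (periodMean r)⁻¹ ^ (p + 1))|
      ≤ p * 2 ^ p * δ * (periodMean r)⁻¹ ^ (p + 1) * periodMean r := by
  have mean_pos := hr.periodMean_pos
  have inv_pow_eq : (periodMean r)⁻¹ ^ p = (periodMean r)⁻¹ ^ (p + 1) * periodMean r := by
    rw [pow_succ, mul_assoc, inv_mul_cancel₀ mean_pos.ne', mul_one]
  have sub_eq : meanRate p r - periodMean r * (1 - (periodMean r)⁻¹ ^ (p + 1))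
      = -(periodMean (r⁻¹ ^ p) - (periodMean r)⁻¹ ^ p) := by
    rw [meanRate, inv_pow_eq]; ring
  rw [sub_eq, abs_neg, mul_assoc _ (_ ^ (p + 1)), ← inv_pow_eq]
  exact abs_periodMean_sub_le (hr.inv_pow hr.ne_zero p).continuous (hr.abs_inv_pow_sub_le p)

lemma integral_iteratedDeriv_one_ge (hr : NearlyRound δ r) (p : ℕ) :
    -(p * ((1 + (p + 1 : ℕ) * 2 ^ (p + 1) * δ) * (periodMean r)⁻¹ ^ (p + 1))) * derivEnergy 1 r
      ≤ ∫ x in 0..(2 * π), iteratedDeriv 1 r x * iteratedDeriv 1 (r⁻¹ ^ p) x := by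
  have h₁ := hr.continuous_iteratedDeriv 1
  have h₂ := (hr.inv_pow hr.ne_zero p).continuous_iteratedDeriv 1
  rw [derivEnergy, ← intervalIntegral.integral_const_mul]
  refine integral_period_mono (by fun_prop) (by fun_prop) fun x => ?_
  have close := (abs_le.1 (hr.abs_inv_pow_sub_le (p + 1) x)).2
  rw [iteratedDeriv_one (f := r⁻¹ ^ p), hr.deriv_inv_pow hr.ne_zero, ← iteratedDeriv_one]
  have : p * (r⁻¹ ^ (p + 1)) x * iteratedDeriv 1 r x ^ 2
      ≤ p * ((1 + (p + 1 : ℕ) * 2 ^ (p + 1) * δ) * (periodMean r)⁻¹ ^ (p + 1))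
        * iteratedDeriv 1 r x ^ 2 := by
    gcongr
    linarith
  linarith

lemma iteratedDeriv_two_mul_le (hr : NearlyRound δ r) (p : ℕ) (x : ℝ) :
    iteratedDeriv 2 r x * iteratedDeriv 2 (r⁻¹ ^ p) x
      ≤ -(p * ((1 - (p + 1 : ℕ) * 2 ^ (p + 1) * δ) * (periodMean r)⁻¹ ^ (p + 1)))
          * iteratedDeriv 2 r x ^ 2
        + p * (p + 1) * ((1 + (p + 2 : ℕ) * 2 ^ (p + 2)) * (periodMean r)⁻¹ ^ (p + 2))
          * (iteratedDeriv 1 r x ^ 2 * |iteratedDeriv 2 r x|) := by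
  have := hr.periodMean_pos
  have pow_nonneg : 0 ≤ (r⁻¹ ^ (p + 2)) x := pow_nonneg (inv_nonneg.2 (hr.pos x).le) _
  have leading : p * ((1 - (p + 1 : ℕ) * 2 ^ (p + 1) * δ) * (periodMean r)⁻¹ ^ (p + 1))
      * iteratedDeriv 2 r x ^ 2 ≤ p * (r⁻¹ ^ (p + 1)) x * iteratedDeriv 2 r x ^ 2 := by
    gcongr
    linarith [(abs_le.1 (hr.abs_inv_pow_sub_le (p + 1) x)).1]
  have cubic : p * (p + 1) * (r⁻¹ ^ (p + 2)) x
        * (iteratedDeriv 1 r x ^ 2 * iteratedDeriv 2 r x)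
      ≤ p * (p + 1) * ((1 + (p + 2 : ℕ) * 2 ^ (p + 2)) * (periodMean r)⁻¹ ^ (p + 2))
        * (iteratedDeriv 1 r x ^ 2 * |iteratedDeriv 2 r x|) :=
    calc _ ≤ p * (p + 1) * (r⁻¹ ^ (p + 2)) x
          * (iteratedDeriv 1 r x ^ 2 * |iteratedDeriv 2 r x|) :=
          mul_le_mul_of_nonneg_left (by gcongr; exact le_abs_self _) (by positivity)
      _ ≤ _ := by gcongr; exact hr.inv_pow_le (p + 2) x
  have expand : iteratedDeriv 2 (r⁻¹ ^ p) x = p * (p + 1) * ((r⁻¹ ^ (p + 2)) x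
      * iteratedDeriv 1 r x ^ 2) - p * ((r⁻¹ ^ (p + 1)) x * iteratedDeriv 2 r x) := by
    rw [← hr.invPowCommutator_one hr.ne_zero, invPowCommutator, add_sub_cancel_right]
  rw [expand]
  linarith

lemma integral_iteratedDeriv_two_le (hr : NearlyRound δ r) (p : ℕ) :
    ∫ x in 0..(2 * π), iteratedDeriv 2 r x * iteratedDeriv 2 (r⁻¹ ^ p) x
      ≤ -(p * (1 - ((p + 1 : ℕ) * 2 ^ (p + 1) + (p + 1) * (1 + (p + 2 : ℕ) * 2 ^ (p + 2))) * δ)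
          * (periodMean r)⁻¹ ^ (p + 1)) * derivEnergy 2 r := by
  have h₁ := hr.continuous_iteratedDeriv 1
  have h₂ := hr.continuous_iteratedDeriv 2
  have h₃ := (hr.inv_pow hr.ne_zero p).continuous_iteratedDeriv 2
  have mean_pos := hr.periodMean_pos
  have pointwise := integral_period_mono (by fun_prop) (by fun_prop)
    (hr.iteratedDeriv_two_mul_le p)
  rw [intervalIntegral.integral_add ((by fun_prop : Continuous _).intervalIntegrable _ _)
    ((by fun_prop : Continuous _).intervalIntegrable _ _), intervalIntegral.integral_const_mul,
    intervalIntegral.integral_const_mul, ← derivEnergy] at pointwise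
  have cubic := mul_le_mul_of_nonneg_left
    (hr.integral_sq_mul_abs_le (mul_nonneg hr.nonneg mean_pos.le) hr.energy_le)
    (show 0 ≤ p * (p + 1) * ((1 + (p + 2 : ℕ) * 2 ^ (p + 2)) * (periodMean r)⁻¹ ^ (p + 2))
      by positivity)
  refine (pointwise.trans (add_le_add le_rfl cubic)).trans_eq ?_
  have inv_pow_eq : (periodMean r)⁻¹ ^ (p + 1) = (periodMean r)⁻¹ ^ (p + 2) * periodMean r := by
    rw [pow_succ _ (p + 1), mul_assoc, inv_mul_cancel₀ mean_pos.ne', mul_one]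
  rw [inv_pow_eq]
  ring

end NearlyRound

-- The Wirtinger inequality without the modes `±1` turns the leading term `-2p m⁻⁽ᵖ⁺¹⁾ E₂` into
-- `-8p m⁻⁽ᵖ⁺¹⁾ E₁`, of which the zeroth-order term consumes a quarter.
lemma exists_energyRate_one_le (p : ℕ) :
    ∃ C : ℝ, 0 ≤ C ∧ ∃ δ₁ : ℝ, 0 < δ₁ ∧ ∀ δ r, NearlyRound δ r → δ ≤ δ₁ →
      energyRate p 1 r ≤ (2 - 6 * p * (periodMean r)⁻¹ ^ (p + 1)
        + C * δ * (periodMean r)⁻¹ ^ (p + 1)) * derivEnergy 1 r := by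
  set K : ℝ := (p + 1 : ℕ) * 2 ^ (p + 1)
  set L : ℝ := K + (p + 1) * (1 + (p + 2 : ℕ) * 2 ^ (p + 2))
  refine ⟨8 * p * L + 2 * p * K, by positivity, L⁻¹, by positivity, fun δ r hr hδ => ?_⟩
  have mean_pos := hr.periodMean_pos
  have small : 0 ≤ 1 - L * δ := by
    have := mul_le_mul_of_nonneg_left hδ (show 0 ≤ L by positivity)
    rw [mul_inv_cancel₀ (by positivity)] at this
    linarith
  have second_order := hr.integral_iteratedDeriv_two_le p
  have zeroth_order := hr.integral_iteratedDeriv_one_ge p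
  have wirtinger : p * (1 - L * δ) * (periodMean r)⁻¹ ^ (p + 1) * (4 * derivEnergy 1 r)
      ≤ p * (1 - L * δ) * (periodMean r)⁻¹ ^ (p + 1) * derivEnergy 2 r := by
    gcongr
    exact hr.four_mul_derivEnergy_one_le hr.fCoeff_one hr.fCoeff_neg_one
  rw [energyRate]
  linarith

/-! ### The pinching system for the energy and the mean -/

lemma antitoneOn_Ici_of_hasDerivAt_nonpos {f f' : ℝ → ℝ} (hc : ContinuousOn f (Ici 0))
    (hd : ∀ τ, 0 < τ → HasDerivAt f (f' τ) τ) (h : ∀ τ, 0 < τ → f' τ ≤ 0) :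
    AntitoneOn f (Ici 0) := by
  refine antitoneOn_of_hasDerivWithinAt_nonpos (convex_Ici 0) hc (f' := f') ?_ ?_ <;>
    rw [interior_Ici]
  · exact fun τ hτ => (hd τ hτ).hasDerivWithinAt
  · exact h

lemma monotoneOn_Ici_of_hasDerivAt_nonneg {f f' : ℝ → ℝ} (hc : ContinuousOn f (Ici 0))
    (hd : ∀ τ, 0 < τ → HasDerivAt f (f' τ) τ) (h : ∀ τ, 0 < τ → 0 ≤ f' τ) :
    MonotoneOn f (Ici 0) := by
  refine monotoneOn_of_hasDerivWithinAt_nonneg (convex_Ici 0) hc (f' := f') ?_ ?_ <;>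
    rw [interior_Ici]
  · exact fun τ hτ => (hd τ hτ).hasDerivWithinAt
  · exact h

lemma lt_of_hasDerivAt_nonpos_of_lt {f f' : ℝ → ℝ} {a : ℝ} (hc : ContinuousOn f (Ici 0))
    (hd : ∀ τ, 0 < τ → HasDerivAt f (f' τ) τ) (h : ∀ τ, 0 < τ → f τ < a → f' τ ≤ 0)
    (h0 : f 0 < a) {τ : ℝ} (hτ : 0 ≤ τ) : f τ < a := by
  by_contra! exit
  have isClosed : IsClosed (Icc 0 τ ∩ f ⁻¹' Ici a) :=
    (hc.mono Icc_subset_Ici_self).preimage_isClosed_of_isClosed isClosed_Icc isClosed_Ici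
  obtain ⟨s, ⟨hs, exit_s⟩, least⟩ :=
    (isCompact_Icc.of_isClosed_subset isClosed inter_subset_left).exists_isLeast
      ⟨τ, ⟨hτ, le_rfl⟩, exit⟩
  have lt_before : ∀ x, 0 ≤ x → x < s → f x < a := fun x hx hxs => by
    by_contra! exit_x
    exact hxs.not_ge (least ⟨⟨hx, hxs.le.trans hs.2⟩, exit_x⟩)
  have antitone : AntitoneOn f (Icc 0 s) := by
    refine antitoneOn_of_hasDerivWithinAt_nonpos (convex_Icc 0 s) (f' := f')
      (hc.mono Icc_subset_Ici_self) ?_ ?_ <;> rw [interior_Icc]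
    · exact fun x hx => (hd x hx.1).hasDerivWithinAt
    · exact fun x hx => h x hx.1 (lt_before x hx.1.le hx.2)
  have exit_le : a ≤ f s := exit_s
  exact (exit_le.trans (antitone ⟨le_rfl, hs.1⟩ ⟨hs.1, le_rfl⟩ hs.1)).not_gt h0

lemma hasDerivAt_inv_pow {μ : ℝ → ℝ} {μ' τ : ℝ} (h : HasDerivAt μ μ' τ) (ne_zero : μ τ ≠ 0)
    (n : ℕ) : HasDerivAt (fun s => (μ s)⁻¹ ^ n) (-(n * ((μ τ)⁻¹ ^ n * (μ' / μ τ)))) τ := by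
  refine ((h.inv ne_zero).pow n).congr_deriv ?_
  rcases n with _ | n
  · simp
  · simp only [Nat.add_sub_cancel, pow_succ, Pi.inv_apply]
    field_simp

/-- The differential inequalities satisfied along the rescaled flow by the Dirichlet energy `E` and
the mean `μ` of the radius of curvature, as long as the curve is `δ`-close to a circle with
`δ ≤ δ₁`; the closeness `2πE ≤ (δμ)²` enters the error terms linearly through `δ`. -/
structure PinchingSystem (p : ℕ) (C δ₁ : ℝ) (E μ E' μ' : ℝ → ℝ) : Prop where
  continuousOn_energy : ContinuousOn E (Ici 0)
  continuousOn_mean : ContinuousOn μ (Ici 0)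
  hasDerivAt_energy : ∀ τ, 0 < τ → HasDerivAt E (E' τ) τ
  hasDerivAt_mean : ∀ τ, 0 < τ → HasDerivAt μ (μ' τ) τ
  energy_nonneg : ∀ τ, 0 ≤ τ → 0 ≤ E τ
  mean_pos : ∀ τ, 0 ≤ τ → 0 < μ τ
  energy_deriv_le : ∀ τ, 0 < τ → ∀ δ, 0 ≤ δ → δ ≤ δ₁ → 2 * π * E τ ≤ (δ * μ τ) ^ 2 →
    E' τ ≤ (2 - 6 * p * (μ τ)⁻¹ ^ (p + 1) + C * δ * (μ τ)⁻¹ ^ (p + 1)) * E τ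
  abs_mean_deriv_sub_le : ∀ τ, 0 < τ → ∀ δ, 0 ≤ δ → δ ≤ δ₁ → 2 * π * E τ ≤ (δ * μ τ) ^ 2 →
    |μ' τ - μ τ * (1 - (μ τ)⁻¹ ^ (p + 1))| ≤ C * δ * (μ τ)⁻¹ ^ (p + 1) * μ τ

namespace PinchingSystem

variable {p : ℕ} {C δ₁ δ₀ : ℝ} {E μ E' μ' : ℝ → ℝ}

lemma continuousOn_inv_mean_pow (S : PinchingSystem p C δ₁ E μ E' μ') (n : ℕ) :
    ContinuousOn (fun τ => (μ τ)⁻¹ ^ n) (Ici 0) :=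
  (S.continuousOn_mean.inv₀ fun τ hτ => (S.mean_pos τ hτ).ne').pow n

lemma hasDerivAt_energy_mul (S : PinchingSystem p C δ₁ E μ E' μ') (n : ℕ) {τ : ℝ} (hτ : 0 < τ) :
    HasDerivAt (fun τ => E τ * (μ τ)⁻¹ ^ n) ((μ τ)⁻¹ ^ n * (E' τ - n * E τ * (μ' τ / μ τ))) τ :=
  ((S.hasDerivAt_energy τ hτ).mul (hasDerivAt_inv_pow (S.hasDerivAt_mean τ hτ)
    (S.mean_pos τ hτ.le).ne' n)).congr_deriv (by ring)

-- The logarithmic derivative of the mean is `1 - μ⁻⁽ᵖ⁺¹⁾` up to an error of order `δ`.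
lemma energy_deriv_sub_le (S : PinchingSystem p C δ₁ E μ E' μ') (n : ℕ) {τ δ : ℝ} (hτ : 0 < τ)
    (hδ : 0 ≤ δ) (hδ₁ : δ ≤ δ₁) (close : 2 * π * E τ ≤ (δ * μ τ) ^ 2) :
    E' τ - n * E τ * (μ' τ / μ τ)
      ≤ E τ * (2 - n + (n - 6 * p + (1 + n) * C * δ) * (μ τ)⁻¹ ^ (p + 1)) := by
  have mean_pos := S.mean_pos τ hτ.le
  have log_deriv_ge : 1 - (μ τ)⁻¹ ^ (p + 1) - C * δ * (μ τ)⁻¹ ^ (p + 1) ≤ μ' τ / μ τ := by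
    rw [le_div_iff₀ mean_pos]
    linarith [(abs_le.1 (S.abs_mean_deriv_sub_le τ hτ δ hδ hδ₁ close)).1]
  have := mul_le_mul_of_nonneg_left log_deriv_ge
    (mul_nonneg n.cast_nonneg (S.energy_nonneg τ hτ.le))
  linarith [S.energy_deriv_le τ hτ δ hδ hδ₁ close]

-- `E / μ²` cannot leave the region where it is decreasing.
lemma two_pi_mul_energy_le (S : PinchingSystem p C δ₁ E μ E' μ') (hp : p ≠ 0) (hδ₀ : 0 ≤ δ₀)
    (hδ₁ : δ₀ ≤ δ₁) (hCδ₀ : 3 * (C * δ₀) ≤ 1) (initial : 2 * π * E 0 < (δ₀ * μ 0) ^ 2) {τ : ℝ}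
    (hτ : 0 ≤ τ) : 2 * π * E τ ≤ (δ₀ * μ τ) ^ 2 := by
  have one_le : (1 : ℝ) ≤ p := by exact_mod_cast Nat.one_le_iff_ne_zero.2 hp
  have close_iff : ∀ τ, 0 ≤ τ →
      (2 * π * E τ < (δ₀ * μ τ) ^ 2 ↔ E τ * (μ τ)⁻¹ ^ 2 < δ₀ ^ 2 / (2 * π)) := fun τ hτ => by
    have := S.mean_pos τ hτ
    rw [inv_pow, ← div_eq_mul_inv, div_lt_div_iff₀ (by positivity) (by positivity), mul_pow,
      mul_comm]
  refine ((close_iff τ hτ).2 <| lt_of_hasDerivAt_nonpos_of_lt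
    (S.continuousOn_energy.mul (S.continuousOn_inv_mean_pow 2))
    (fun s hs => S.hasDerivAt_energy_mul 2 hs) (fun s hs lt => ?_)
    ((close_iff 0 le_rfl).1 initial) hτ).le
  have mean_pos := S.mean_pos s hs.le
  refine mul_nonpos_of_nonneg_of_nonpos (by positivity)
    ((S.energy_deriv_sub_le 2 hs hδ₀ hδ₁ ((close_iff s hs.le).2 lt).le).trans ?_)
  refine mul_nonpos_of_nonneg_of_nonpos (S.energy_nonneg s hs.le) ?_
  have : ((2 : ℕ) - 6 * p + (1 + (2 : ℕ)) * C * δ₀) * (μ s)⁻¹ ^ (p + 1) ≤ 0 :=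
    mul_nonpos_of_nonpos_of_nonneg (by push_cast; linarith) (by positivity)
  push_cast at this ⊢
  linarith

lemma abs_mean_pow_mul_deriv_sub_le (S : PinchingSystem p C δ₁ E μ E' μ') (hδ₀ : 0 ≤ δ₀)
    (hδ₁ : δ₀ ≤ δ₁) {τ : ℝ} (hτ : 0 < τ) (close : 2 * π * E τ ≤ (δ₀ * μ τ) ^ 2) :
    |μ τ ^ p * μ' τ - (μ τ ^ (p + 1) - 1)| ≤ C * δ₀ := by
  have mean_pos := S.mean_pos τ hτ.le
  have cancel : μ τ ^ p * (μ τ * (μ τ)⁻¹ ^ (p + 1)) = 1 := by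
    rw [← mul_assoc, ← pow_succ, ← mul_pow, mul_inv_cancel₀ mean_pos.ne', one_pow]
  have key := mul_le_mul_of_nonneg_left
    (S.abs_mean_deriv_sub_le τ hτ δ₀ hδ₀ hδ₁ close) (pow_pos mean_pos p).le
  rw [← abs_of_pos (pow_pos mean_pos p), ← abs_mul, abs_of_pos (pow_pos mean_pos p)] at key
  calc |μ τ ^ p * μ' τ - (μ τ ^ (p + 1) - 1)|
      = |μ τ ^ p * (μ' τ - μ τ * (1 - (μ τ)⁻¹ ^ (p + 1)))| := by
        congr 1
        linear_combination -cancel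
    _ ≤ μ τ ^ p * (C * δ₀ * (μ τ)⁻¹ ^ (p + 1) * μ τ) := key
    _ = C * δ₀ := by linear_combination C * δ₀ * cancel

lemma hasDerivAt_exp_mul_mean_pow_sub (S : PinchingSystem p C δ₁ E μ E' μ') (κ : ℝ) {τ : ℝ}
    (hτ : 0 < τ) : HasDerivAt (fun τ => exp (-((p + 1) * τ)) * (μ τ ^ (p + 1) - κ))
      ((p + 1) * exp (-((p + 1) * τ)) * (μ τ ^ p * μ' τ - (μ τ ^ (p + 1) - κ))) τ := by
  have hexp : HasDerivAt (fun τ : ℝ => exp (-((p + 1) * τ)))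
      (exp (-((p + 1) * τ)) * (-((p + 1) * 1))) τ :=
    ((hasDerivAt_id τ).const_mul ((p : ℝ) + 1)).neg.exp
  refine (hexp.mul (((S.hasDerivAt_mean τ hτ).pow (p + 1)).sub_const κ)).congr_deriv ?_
  simp only [Nat.add_sub_cancel, Pi.pow_apply]
  push_cast
  ring

lemma continuousOn_exp_mul_mean_pow_sub (S : PinchingSystem p C δ₁ E μ E' μ') (κ : ℝ) :
    ContinuousOn (fun τ => exp (-((p + 1) * τ)) * (μ τ ^ (p + 1) - κ)) (Ici 0) :=
  ContinuousOn.mul (by fun_prop) ((S.continuousOn_mean.pow _).sub continuousOn_const)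

end PinchingSystem

lemma tendsto_exp_mul_pow_sub {μ : ℝ → ℝ} (hμ : Tendsto (fun τ => exp (-τ) * μ τ) atTop (nhds 0))
    (n : ℕ) (κ : ℝ) :
    Tendsto (fun τ => exp (-((n + 1) * τ)) * (μ τ ^ (n + 1) - κ)) atTop (nhds 0) := by
  have hexp := (Real.tendsto_exp_neg_atTop_nhds_zero.pow (n + 1)).mul_const κ
  have hdiff := (hμ.pow (n + 1)).sub hexp
  rw [zero_pow n.succ_ne_zero, zero_mul, sub_zero] at hdiff
  refine hdiff.congr fun τ => ?_
  have : exp (-((n + 1) * τ)) = exp (-τ) ^ (n + 1) := by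
    rw [← Real.exp_nat_mul]
    congr 1
    push_cast
    ring
  rw [this]
  ring

namespace PinchingSystem

variable {p : ℕ} {C δ₁ δ₀ : ℝ} {E μ E' μ' : ℝ → ℝ}

-- The stationary point `μ = 1` is unstable, so only solutions staying near it satisfy the
-- normalization `e^{-τ} μ → 0` of the blow-up time.
lemma half_le_mean_pow (S : PinchingSystem p C δ₁ E μ E' μ') (hδ₀ : 0 ≤ δ₀) (hδ₁ : δ₀ ≤ δ₁)
    (hCδ₀ : 2 * (C * δ₀) ≤ 1) (close : ∀ τ, 0 ≤ τ → 2 * π * E τ ≤ (δ₀ * μ τ) ^ 2)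
    (hμ : Tendsto (fun τ => exp (-τ) * μ τ) atTop (nhds 0)) {τ : ℝ} (hτ : 0 ≤ τ) :
    1 / 2 ≤ μ τ ^ (p + 1) := by
  have antitone := antitoneOn_Ici_of_hasDerivAt_nonpos (S.continuousOn_exp_mul_mean_pow_sub (1 / 2))
    (fun s hs => S.hasDerivAt_exp_mul_mean_pow_sub (1 / 2) hs) fun s hs => by
      have := (abs_le.1 (S.abs_mean_pow_mul_deriv_sub_le hδ₀ hδ₁ hs (close s hs.le))).2
      exact mul_nonpos_of_nonneg_of_nonpos (by positivity) (by linarith)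
  have nonneg := le_of_tendsto (tendsto_exp_mul_pow_sub hμ p (1 / 2))
    (eventually_atTop.2 ⟨τ, fun s hs => antitone hτ (hτ.trans hs) hs⟩)
  exact sub_nonneg.1 (nonneg_of_mul_nonneg_right nonneg (exp_pos _))

lemma mean_pow_le_three_halves (S : PinchingSystem p C δ₁ E μ E' μ') (hδ₀ : 0 ≤ δ₀)
    (hδ₁ : δ₀ ≤ δ₁) (hCδ₀ : 2 * (C * δ₀) ≤ 1)
    (close : ∀ τ, 0 ≤ τ → 2 * π * E τ ≤ (δ₀ * μ τ) ^ 2)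
    (hμ : Tendsto (fun τ => exp (-τ) * μ τ) atTop (nhds 0)) {τ : ℝ} (hτ : 0 ≤ τ) :
    μ τ ^ (p + 1) ≤ 3 / 2 := by
  have monotone := monotoneOn_Ici_of_hasDerivAt_nonneg
    (S.continuousOn_exp_mul_mean_pow_sub (3 / 2))
    (fun s hs => S.hasDerivAt_exp_mul_mean_pow_sub (3 / 2) hs) fun s hs => by
      have := (abs_le.1 (S.abs_mean_pow_mul_deriv_sub_le hδ₀ hδ₁ hs (close s hs.le))).1
      exact mul_nonneg (by positivity) (by linarith)
  have nonpos := ge_of_tendsto (tendsto_exp_mul_pow_sub hμ p (3 / 2))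
    (eventually_atTop.2 ⟨τ, fun s hs => monotone hτ (hτ.trans hs) hs⟩)
  exact sub_nonpos.1 (nonpos_of_mul_nonpos_right nonpos (exp_pos _))

lemma antitoneOn_energy_mul_exp (S : PinchingSystem p C δ₁ E μ E' μ') (hC : 0 ≤ C)
    (half_le : ∀ τ, 0 ≤ τ → 1 / 2 ≤ μ τ ^ (p + 1)) {δ h h' : ℝ → ℝ}
    (hδ : ∀ τ, 0 < τ → 0 ≤ δ τ) (hδ₁ : ∀ τ, 0 < τ → δ τ ≤ δ₁)
    (close : ∀ τ, 0 < τ → 2 * π * E τ ≤ (δ τ * μ τ) ^ 2) (hh : ∀ τ, HasDerivAt h (h' τ) τ)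
    (rate : ∀ τ, 0 < τ → h' τ + 2 * (1 + 6 * p) * C * δ τ ≤ 6 * p - 2) :
    AntitoneOn (fun τ => E τ * (μ τ)⁻¹ ^ (6 * p) * exp (h τ)) (Ici 0) := by
  have continuous_h : Continuous h := continuous_iff_continuousAt.2 fun τ => (hh τ).continuousAt
  refine antitoneOn_Ici_of_hasDerivAt_nonpos
    ((S.continuousOn_energy.mul (S.continuousOn_inv_mean_pow (6 * p))).mul
      (Real.continuous_exp.comp continuous_h).continuousOn)
    (f' := fun τ => (μ τ)⁻¹ ^ (6 * p) * exp (h τ)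
      * (E' τ - (6 * p : ℕ) * E τ * (μ' τ / μ τ) + E τ * h' τ))
    (fun τ hτ => ((S.hasDerivAt_energy_mul (6 * p) hτ).mul (hh τ).exp).congr_deriv (by ring))
    fun τ hτ => ?_
  have mean_pos := S.mean_pos τ hτ.le
  have inv_pow_le : (μ τ)⁻¹ ^ (p + 1) ≤ 2 := by
    rw [inv_pow]
    exact inv_le_of_inv_le₀ two_pos (by linarith [half_le τ hτ.le])
  have rate_le : 2 - 6 * p + (1 + 6 * p) * C * δ τ * (μ τ)⁻¹ ^ (p + 1) + h' τ ≤ 0 := by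
    have := mul_le_mul_of_nonneg_left inv_pow_le
      (show 0 ≤ (1 + 6 * p) * C * δ τ by have := hδ τ hτ; positivity)
    linarith [rate τ hτ]
  have energy_le := S.energy_deriv_sub_le (6 * p) hτ (hδ τ hτ) (hδ₁ τ hτ) (close τ hτ)
  have := mul_nonpos_of_nonneg_of_nonpos (S.energy_nonneg τ hτ.le) rate_le
  refine mul_nonpos_of_nonneg_of_nonpos (by positivity) ?_
  push_cast at energy_le ⊢
  linarith

lemma energy_le_of_antitoneOn (S : PinchingSystem p C δ₁ E μ E' μ') {B : ℝ} {h : ℝ → ℝ} {n : ℕ}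
    (antitone : AntitoneOn (fun τ => E τ * (μ τ)⁻¹ ^ n * exp (h τ)) (Ici 0))
    (mean_le : ∀ τ, 0 ≤ τ → μ τ ≤ B) {τ : ℝ} (hτ : 0 ≤ τ) :
    E τ ≤ E 0 * (μ 0)⁻¹ ^ n * exp (h 0) * B ^ n * exp (-h τ) := by
  have mean_pos := S.mean_pos τ hτ
  have initial_mean_pos := S.mean_pos 0 le_rfl
  have initial_nonneg := S.energy_nonneg 0 le_rfl
  calc E τ = E τ * (μ τ)⁻¹ ^ n * exp (h τ) * μ τ ^ n * exp (-h τ) := by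
        rw [Real.exp_neg, inv_pow]
        field_simp
    _ ≤ E 0 * (μ 0)⁻¹ ^ n * exp (h 0) * B ^ n * exp (-h τ) := by
        gcongr ?_ * ?_ ^ n * _
        · exact antitone self_mem_Ici hτ hτ
        · exact mean_le τ hτ

lemma exists_sqrt_energy_div_le (S : PinchingSystem p C δ₁ E μ E' μ') (hp : p ≠ 0) (hC : 0 ≤ C)
    (hδ₀ : 0 ≤ δ₀) (hδ₁ : δ₀ ≤ δ₁) (hCδ₀ : 2 * (1 + 6 * p) * C * δ₀ ≤ 1)
    (close : ∀ τ, 0 ≤ τ → 2 * π * E τ ≤ (δ₀ * μ τ) ^ 2)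
    (half_le : ∀ τ, 0 ≤ τ → 1 / 2 ≤ μ τ ^ (p + 1)) {b B : ℝ} (hb : 0 < b)
    (le_mean : ∀ τ, 0 ≤ τ → b ≤ μ τ) (mean_le : ∀ τ, 0 ≤ τ → μ τ ≤ B) :
    ∃ K : ℝ, 0 ≤ K ∧ ∀ τ, 0 ≤ τ → √(2 * π * E τ) / μ τ ≤ K * exp (-τ) := by
  have one_le : (1 : ℝ) ≤ p := by exact_mod_cast Nat.one_le_iff_ne_zero.2 hp
  have energy_le := fun τ (hτ : 0 ≤ τ) => S.energy_le_of_antitoneOn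
    (S.antitoneOn_energy_mul_exp hC half_le (δ := fun _ => δ₀) (h := fun τ => 3 * τ)
      (h' := fun _ => 3 * 1) (fun _ _ => hδ₀) (fun _ _ => hδ₁) (fun τ hτ => close τ hτ.le)
      (fun τ => (hasDerivAt_id τ).const_mul 3) fun _ _ => by linarith) mean_le hτ
  set P := E 0 * (μ 0)⁻¹ ^ (6 * p) * exp (3 * 0) * B ^ (6 * p)
  have hP : 0 ≤ P := (S.energy_nonneg 0 le_rfl).trans (by simpa using energy_le 0 le_rfl)
  refine ⟨√(2 * π * P) / b, by positivity, fun τ hτ => ?_⟩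
  have := S.mean_pos τ hτ
  have sq_le : 2 * π * E τ ≤ 2 * π * P * exp (-τ) ^ 2 :=
    calc 2 * π * E τ ≤ 2 * π * (P * exp (-(3 * τ))) := by gcongr; exact energy_le τ hτ
      _ ≤ 2 * π * (P * exp (2 * -τ)) := by gcongr; linarith
      _ = 2 * π * P * exp (-τ) ^ 2 := by rw [← Real.exp_nat_mul]; push_cast; ring
  calc √(2 * π * E τ) / μ τ ≤ √(2 * π * P * exp (-τ) ^ 2) / b := by
        gcongr
        exact le_mean τ hτ
    _ = √(2 * π * P) / b * exp (-τ) := by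
        rw [Real.sqrt_mul (by positivity), Real.sqrt_sq (exp_pos _).le, div_mul_eq_mul_div]

-- A first pass with the constant pinching `δ₀` gives some exponential decay of `√E / μ`; feeding
-- this back as a time-dependent pinching makes the error integrable and yields the sharp rate.
lemma exists_energy_le (S : PinchingSystem p C δ₁ E μ E' μ') (hp : p ≠ 0) (hC : 0 ≤ C)
    (hδ₀ : 0 ≤ δ₀) (hδ₁ : δ₀ ≤ δ₁) (hCδ₀ : 2 * (1 + 6 * p) * C * δ₀ ≤ 1)
    (close : ∀ τ, 0 ≤ τ → 2 * π * E τ ≤ (δ₀ * μ τ) ^ 2)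
    (half_le : ∀ τ, 0 ≤ τ → 1 / 2 ≤ μ τ ^ (p + 1)) {b B : ℝ} (hb : 0 < b)
    (le_mean : ∀ τ, 0 ≤ τ → b ≤ μ τ) (mean_le : ∀ τ, 0 ≤ τ → μ τ ≤ B) :
    ∃ M : ℝ, 0 ≤ M ∧ ∀ τ, 0 ≤ τ → E τ ≤ M * exp (-(6 * p - 2) * τ) := by
  obtain ⟨K, hK, pinching_le⟩ :=
    S.exists_sqrt_energy_div_le hp hC hδ₀ hδ₁ hCδ₀ close half_le hb le_mean mean_le
  set G := 2 * (1 + 6 * p) * C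
  have hG₀ : 0 ≤ G := by positivity
  have energy_le := fun τ (hτ : 0 ≤ τ) => S.energy_le_of_antitoneOn
    (S.antitoneOn_energy_mul_exp hC half_le (δ := fun τ => √(2 * π * E τ) / μ τ)
      (h := fun τ => (6 * p - 2) * τ + G * K * exp (-τ))
      (h' := fun τ => (6 * p - 2) * 1 + G * K * (exp (-τ) * (-1)))
      (fun τ hτ => div_nonneg (Real.sqrt_nonneg _) (S.mean_pos τ hτ.le).le)
      (fun τ hτ => by
        have mean_pos := S.mean_pos τ hτ.le
        refine le_trans ?_ hδ₁
        rw [div_le_iff₀ mean_pos]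
        exact Real.sqrt_le_iff.2 ⟨by positivity, close τ hτ.le⟩)
      (fun τ hτ => by
        have energy_nonneg := S.energy_nonneg τ hτ.le
        rw [div_mul_cancel₀ _ (S.mean_pos τ hτ.le).ne', Real.sq_sqrt (by positivity)])
      (fun τ => ((hasDerivAt_id τ).const_mul _).add ((hasDerivAt_id τ).neg.exp.const_mul _))
      fun τ hτ => by linarith [mul_le_mul_of_nonneg_left (pinching_le τ hτ.le) hG₀]) mean_le hτ
  have initial_nonneg := S.energy_nonneg 0 le_rfl
  have mean_pos := S.mean_pos 0 le_rfl
  have hB : 0 ≤ B := mean_pos.le.trans (mean_le 0 le_rfl)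
  refine ⟨_, ?_, fun τ hτ => (energy_le τ hτ).trans
    (mul_le_mul_of_nonneg_left (Real.exp_le_exp.2 ?_) ?_)⟩
  · positivity
  · have : 0 ≤ G * K * exp (-τ) := by positivity
    linarith
  · positivity

end PinchingSystem

/-! ### The rescaled flow of the radius of curvature -/

/-- The speed of the radius of curvature `r = 1/k̃` under the rescaled flow: multiplying the
`p`-curve shortening equation by `-k⁻²` gives `∂r/∂τ = r - ∂²(r⁻ᵖ) - r⁻ᵖ`. -/
noncomputable def radiusSpeed (p : ℕ) (r : ℝ → ℝ) : ℝ → ℝ :=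
  r - iteratedDeriv 2 (r⁻¹ ^ p) - r⁻¹ ^ p

namespace SmoothPeriodic

variable {r : ℝ → ℝ}

lemma periodMean_radiusSpeed (hr : SmoothPeriodic r) (ne_zero : ∀ x, r x ≠ 0) (p : ℕ) :
    periodMean (radiusSpeed p r) = meanRate p r := by
  have hv := hr.inv_pow ne_zero p
  have exact_part : ∫ x in 0..(2 * π), iteratedDeriv 2 (r⁻¹ ^ p) x = 0 := by
    rw [iteratedDeriv_succ]
    exact (hv.iteratedDeriv 1).integral_deriv_eq_zero
  have hr_int := hr.intervalIntegrable 0 (2 * π)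
  have second_int := (hv.iteratedDeriv 2).intervalIntegrable 0 (2 * π)
  simp only [meanRate, periodMean, radiusSpeed, Pi.sub_apply]
  rw [intervalIntegral.integral_sub (hr_int.sub second_int) (hv.intervalIntegrable _ _),
    intervalIntegral.integral_sub hr_int second_int, exact_part]
  ring

lemma iteratedDeriv_radiusSpeed (hr : SmoothPeriodic r) (ne_zero : ∀ x, r x ≠ 0) (p l : ℕ)
    (x : ℝ) :
    iteratedDeriv l (radiusSpeed p r) x
      = iteratedDeriv l r x - iteratedDeriv (l + 2) (r⁻¹ ^ p) x
        - iteratedDeriv l (r⁻¹ ^ p) x := by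
  have hv := hr.inv_pow ne_zero p
  have smooth {f : ℝ → ℝ} (hf : SmoothPeriodic f) : ContDiffAt ℝ l f x :=
    (hf.contDiff.of_le (by exact_mod_cast le_top)).contDiffAt
  have iterate_add : iteratedDeriv l (iteratedDeriv 2 (r⁻¹ ^ p))
      = iteratedDeriv (l + 2) (r⁻¹ ^ p) := by
    simp only [iteratedDeriv_eq_iterate, ← Function.iterate_add_apply]
  have smooth_sub : ContDiffAt ℝ l (r - iteratedDeriv 2 (r⁻¹ ^ p)) x :=
    (smooth hr).sub (smooth (hv.iteratedDeriv 2))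
  rw [radiusSpeed, iteratedDeriv_sub smooth_sub (smooth hv),
    iteratedDeriv_sub (smooth hr) (smooth (hv.iteratedDeriv 2)), iterate_add]

lemma integral_iteratedDeriv_mul_radiusSpeed (hr : SmoothPeriodic r) (ne_zero : ∀ x, r x ≠ 0)
    (p l : ℕ) :
    ∫ x in 0..(2 * π), 2 * (iteratedDeriv l r x * iteratedDeriv l (radiusSpeed p r) x)
      = energyRate p l r := by
  have hv := hr.inv_pow ne_zero p
  have by_parts : ∫ x in 0..(2 * π), iteratedDeriv l r x * iteratedDeriv (l + 2) (r⁻¹ ^ p) x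
      = -∫ x in 0..(2 * π), iteratedDeriv (l + 1) r x * iteratedDeriv (l + 1) (r⁻¹ ^ p) x := by
    simpa only [← iteratedDeriv_succ]
      using (hr.iteratedDeriv l).integral_mul_deriv_eq_neg (hv.iteratedDeriv (l + 1))
  have h₁ := hr.continuous_iteratedDeriv l
  have h₂ := hv.continuous_iteratedDeriv (l + 2)
  have h₃ := hv.continuous_iteratedDeriv l
  simp only [hr.iteratedDeriv_radiusSpeed ne_zero, mul_sub, energyRate, derivEnergy]
  rw [intervalIntegral.integral_sub ((by fun_prop : Continuous _).intervalIntegrable _ _)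
      ((by fun_prop : Continuous _).intervalIntegrable _ _),
    intervalIntegral.integral_sub ((by fun_prop : Continuous _).intervalIntegrable _ _)
      ((by fun_prop : Continuous _).intervalIntegrable _ _)]
  simp only [intervalIntegral.integral_const_mul, by_parts, sq]
  ring

end SmoothPeriodic

/-- The radius of curvature of closed convex curves evolving by the rescaled flow. The last field
encodes the choice of the blow-up time as the time of rescaling: `e^τ / r` is a constant multiple of
the curvature of the unrescaled curve. -/
structure RescaledRadiusFlow (p : ℕ) (r : ℝ → ℝ → ℝ) : Prop where
  smooth : SmoothSpaceTime r
  periodic : ∀ θ τ, r (θ + 2 * π) τ = r θ τ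
  pos : ∀ θ τ, 0 ≤ τ → 0 < r θ τ
  hasDerivAt : ∀ θ τ, 0 < τ → HasDerivAt (fun s => r θ s) (radiusSpeed p (r · τ) θ) τ
  fCoeff_one : ∀ τ, 0 ≤ τ → fCoeff (r · τ) 1 = 0
  fCoeff_neg_one : ∀ τ, 0 ≤ τ → fCoeff (r · τ) (-1) = 0
  blowUp : ∀ M, ∃ τ₀, ∀ τ, τ₀ ≤ τ → ∃ θ, M ≤ exp τ * (r θ τ)⁻¹

namespace RescaledRadiusFlow

variable {p : ℕ} {r : ℝ → ℝ → ℝ} {τ : ℝ}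

lemma smoothPeriodic (F : RescaledRadiusFlow p r) (hτ : 0 ≤ τ) : SmoothPeriodic (r · τ) :=
  ⟨F.smooth.contDiff_slice hτ, fun x => F.periodic x τ⟩

lemma ne_zero (F : RescaledRadiusFlow p r) (hτ : 0 ≤ τ) (x : ℝ) : r x τ ≠ 0 := (F.pos x τ hτ).ne'

lemma periodMean_pos (F : RescaledRadiusFlow p r) (hτ : 0 ≤ τ) : 0 < periodMean (r · τ) :=
  _root_.periodMean_pos (F.smoothPeriodic hτ).continuous fun x => F.pos x τ hτ

lemma continuousOn_derivEnergy (F : RescaledRadiusFlow p r) (l : ℕ) :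
    ContinuousOn (fun s => derivEnergy l (r · s)) (Ici 0) :=
  ((F.smooth.iteratedDeriv l).pow 2).continuousOn_integral

lemma continuousOn_periodMean (F : RescaledRadiusFlow p r) :
    ContinuousOn (fun s => periodMean (r · s)) (Ici 0) :=
  continuousOn_const.mul F.smooth.continuousOn_integral

lemma hasDerivAt_periodMean (F : RescaledRadiusFlow p r) (hτ : 0 < τ) :
    HasDerivAt (fun s => periodMean (r · s)) (meanRate p (r · τ)) τ := by
  rw [← (F.smoothPeriodic hτ.le).periodMean_radiusSpeed (F.ne_zero hτ.le)]
  exact (F.smooth.hasDerivAt_integral hτ fun θ => F.hasDerivAt θ τ hτ).const_mul (2 * π)⁻¹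

lemma hasDerivAt_derivEnergy (F : RescaledRadiusFlow p r) (hτ : 0 < τ) (l : ℕ) :
    HasDerivAt (fun s => derivEnergy l (r · s)) (energyRate p l (r · τ)) τ := by
  have pointwise (θ : ℝ) :=
    (F.smooth.hasDerivAt_iteratedDeriv hτ (fun θ => F.hasDerivAt θ τ hτ) l θ).pow 2
  rw [← (F.smoothPeriodic hτ.le).integral_iteratedDeriv_mul_radiusSpeed (F.ne_zero hτ.le)]
  refine (((F.smooth.iteratedDeriv l).pow 2).hasDerivAt_integral hτ pointwise).congr_deriv
    (intervalIntegral.integral_congr fun x _ => ?_)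
  push_cast
  ring

lemma nearlyRound (F : RescaledRadiusFlow p r) (hτ : 0 ≤ τ) {δ : ℝ} (hδ : 0 ≤ δ)
    (hδ_half : δ ≤ 1 / 2)
    (close : 2 * π * derivEnergy 1 (r · τ) ≤ (δ * periodMean (r · τ)) ^ 2) :
    NearlyRound δ (r · τ) where
  toSmoothPeriodic := F.smoothPeriodic hτ
  pos x := F.pos x τ hτ
  fCoeff_one := F.fCoeff_one τ hτ
  fCoeff_neg_one := F.fCoeff_neg_one τ hτ
  nonneg := hδ
  le_half := hδ_half
  energy_le := close

lemma exists_pinchingSystem (p : ℕ) :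
    ∃ C : ℝ, 0 ≤ C ∧ ∃ δ₁ : ℝ, 0 < δ₁ ∧ δ₁ ≤ 1 / 2 ∧ ∀ r, RescaledRadiusFlow p r →
      PinchingSystem p C δ₁ (fun τ => derivEnergy 1 (r · τ)) (fun τ => periodMean (r · τ))
        (fun τ => energyRate p 1 (r · τ)) (fun τ => meanRate p (r · τ)) := by
  obtain ⟨C, hC, δ₁, hδ₁, energyRate_le⟩ := exists_energyRate_one_le p
  refine ⟨C + p * 2 ^ p, by positivity, min δ₁ (1 / 2), by positivity, min_le_right _ _,
    fun r F => ?_⟩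
  have inv_mean_pos {τ : ℝ} (hτ : 0 < τ) : 0 < (periodMean (r · τ))⁻¹ ^ (p + 1) :=
    pow_pos (inv_pos.2 (F.periodMean_pos hτ.le)) _
  refine
    { continuousOn_energy := F.continuousOn_derivEnergy 1
      continuousOn_mean := F.continuousOn_periodMean
      hasDerivAt_energy := fun τ hτ => F.hasDerivAt_derivEnergy hτ 1
      hasDerivAt_mean := fun τ hτ => F.hasDerivAt_periodMean hτ
      energy_nonneg := fun τ _ => derivEnergy_nonneg 1 _
      mean_pos := fun τ hτ => F.periodMean_pos hτ
      energy_deriv_le := fun τ hτ δ hδ hδ_le close => ?_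
      abs_mean_deriv_sub_le := fun τ hτ δ hδ hδ_le close => ?_ }
  all_goals
    have round := F.nearlyRound hτ.le hδ (hδ_le.trans (min_le_right _ _)) close
    have := inv_mean_pos hτ
  · refine (energyRate_le δ _ round (hδ_le.trans (min_le_left _ _))).trans ?_
    gcongr ?_ * _
    · exact derivEnergy_nonneg 1 _
    · gcongr
      exact le_add_of_nonneg_right (by positivity)
  · have := F.periodMean_pos hτ.le
    refine (round.abs_meanRate_sub_le p).trans ?_
    gcongr
    exact le_add_of_nonneg_left hC

end RescaledRadiusFlow

namespace NearlyRound

variable {δ : ℝ} {r : ℝ → ℝ}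

lemma half_mul_periodMean_le (hr : NearlyRound δ r) (x : ℝ) : 1 / 2 * periodMean r ≤ r x := by
  have := mul_le_mul_of_nonneg_right hr.le_half hr.periodMean_pos.le
  linarith [(abs_le.1 (hr.abs_sub_periodMean_le x)).1]

lemma le_three_halves_mul_periodMean (hr : NearlyRound δ r) (x : ℝ) :
    r x ≤ 3 / 2 * periodMean r := by
  have := mul_le_mul_of_nonneg_right hr.le_half hr.periodMean_pos.le
  linarith [(abs_le.1 (hr.abs_sub_periodMean_le x)).2]

end NearlyRound

lemma exists_pos_le_mul_le_one {C δ₁ : ℝ} (hC : 0 ≤ C) (hδ₁ : 0 < δ₁) :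
    ∃ δ₀ : ℝ, 0 < δ₀ ∧ δ₀ ≤ δ₁ ∧ C * δ₀ ≤ 1 := by
  refine ⟨min δ₁ (C + 1)⁻¹, by positivity, min_le_left _ _, ?_⟩
  calc C * min δ₁ (C + 1)⁻¹ ≤ (C + 1) * (C + 1)⁻¹ := by
        gcongr
        · linarith
        · exact min_le_right _ _
    _ = 1 := mul_inv_cancel₀ (by positivity)

lemma le_of_le_pow_of_le_one {x c : ℝ} {n : ℕ} (hx : 0 ≤ x) (hc : c ≤ 1) (hn : n ≠ 0)
    (h : c ≤ x ^ n) : c ≤ x := by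
  by_contra! lt
  exact (h.trans (pow_le_of_le_one hx (lt.le.trans hc) hn)).not_gt lt

lemma le_of_pow_le_of_one_le {x c : ℝ} {n : ℕ} (hc : 1 ≤ c) (hn : n ≠ 0) (h : x ^ n ≤ c) :
    x ≤ c := by
  by_contra! lt
  exact ((le_self_pow₀ (hc.trans lt.le) hn).trans h).not_gt lt

/-- Decay of `f` on `[0, ∞)` at the exponential rate `γ`, one-sidedly from above. -/
def ExpDecay (γ : ℝ) (f : ℝ → ℝ) : Prop :=
  ∃ M : ℝ, 0 ≤ M ∧ ∀ τ, 0 ≤ τ → f τ ≤ M * exp (-γ * τ)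

namespace RescaledRadiusFlow

variable {p : ℕ} {r : ℝ → ℝ → ℝ}

lemma tendsto_exp_neg_mul_periodMean (F : RescaledRadiusFlow p r)
    (half_mean_le : ∀ τ, 0 ≤ τ → ∀ x, 1 / 2 * periodMean (r · τ) ≤ r x τ) :
    Tendsto (fun τ => exp (-τ) * periodMean (r · τ)) atTop (nhds 0) := by
  rw [Metric.tendsto_atTop]
  intro ε hε
  obtain ⟨τ₀, blowUp⟩ := F.blowUp (4 / ε)
  refine ⟨max τ₀ 0, fun τ hτ => ?_⟩
  have hτ₀ : 0 ≤ τ := (le_max_right _ _).trans hτ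
  obtain ⟨θ, hθ⟩ := blowUp τ ((le_max_left _ _).trans hτ)
  have mean_pos := F.periodMean_pos hτ₀
  rw [← div_eq_mul_inv, div_le_div_iff₀ hε (F.pos θ τ hτ₀)] at hθ
  rw [Real.dist_eq, sub_zero, abs_of_pos (by positivity), Real.exp_neg,
    inv_mul_lt_iff₀ (exp_pos τ)]
  linarith [half_mean_le τ hτ₀ θ]

lemma exists_expDecay_derivEnergy_one (hp : p ≠ 0) :
    ∃ δ₀ : ℝ, 0 < δ₀ ∧ ∀ r, RescaledRadiusFlow p r →
      2 * π * derivEnergy 1 (r · 0) < (δ₀ * periodMean (r · 0)) ^ 2 →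
      ExpDecay (6 * p - 2) (fun τ => derivEnergy 1 (r · τ)) ∧
        ∀ θ τ, 0 ≤ τ → r θ τ ∈ Icc (1 / 4) (9 / 4) := by
  obtain ⟨C, hC, δ₁, hδ₁, hδ₁_half, pinchingSystem⟩ := exists_pinchingSystem p
  have one_le : (1 : ℝ) ≤ p := by exact_mod_cast Nat.one_le_iff_ne_zero.2 hp
  obtain ⟨δ₀, hδ₀, hδ₀_le, small⟩ :=
    exists_pos_le_mul_le_one (show 0 ≤ 2 * (1 + 6 * p) * C by positivity) hδ₁
  have three_mul_le : 3 * (C * δ₀) ≤ 1 := by nlinarith [mul_nonneg hC hδ₀.le]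
  refine ⟨δ₀, hδ₀, fun r F initial => ?_⟩
  have S := pinchingSystem r F
  have close := fun τ (hτ : 0 ≤ τ) =>
    S.two_pi_mul_energy_le hp hδ₀.le hδ₀_le three_mul_le initial hτ
  have round := fun τ (hτ : 0 ≤ τ) =>
    F.nearlyRound hτ hδ₀.le (hδ₀_le.trans hδ₁_half) (close τ hτ)
  have normalized := F.tendsto_exp_neg_mul_periodMean fun τ hτ =>
    (round τ hτ).half_mul_periodMean_le
  have half_le_pow := fun τ (hτ : 0 ≤ τ) =>
    S.half_le_mean_pow hδ₀.le hδ₀_le (by nlinarith) close normalized hτ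
  have half_le_mean : ∀ τ, 0 ≤ τ → 1 / 2 ≤ periodMean (r · τ) := fun τ hτ =>
    le_of_le_pow_of_le_one (F.periodMean_pos hτ).le (by norm_num) p.add_one_ne_zero
      (half_le_pow τ hτ)
  have mean_le : ∀ τ, 0 ≤ τ → periodMean (r · τ) ≤ 3 / 2 := fun τ hτ =>
    le_of_pow_le_of_one_le (by norm_num) p.add_one_ne_zero
      (S.mean_pow_le_three_halves hδ₀.le hδ₀_le (by nlinarith) close normalized hτ)
  refine ⟨S.exists_energy_le hp hC hδ₀.le hδ₀_le small close half_le_pow one_half_pos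
    half_le_mean mean_le, fun θ τ hτ => ⟨?_, ?_⟩⟩
  · linarith [(round τ hτ).half_mul_periodMean_le θ, half_le_mean τ hτ]
  · linarith [(round τ hτ).le_three_halves_mul_periodMean θ, mean_le τ hτ]

end RescaledRadiusFlow

/-! ### Decay of all derivatives -/

lemma exists_nonneg_forall_of_mono {ι : Type*} {s : Set ι} (hs : s.Finite) {P : ι → ℝ → Prop}
    (mono : ∀ i a b, a ≤ b → P i a → P i b) (h : ∀ i ∈ s, ∃ C, P i C) :
    ∃ C : ℝ, 0 ≤ C ∧ ∀ i ∈ s, P i C := by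
  have eventually_all : ∀ᶠ C in atTop, ∀ i ∈ s, P i C := hs.eventually_all.2 fun i hi => by
    obtain ⟨C, hC⟩ := h i hi
    exact eventually_atTop.2 ⟨C, fun D hD => mono i C D hD hC⟩
  exact ((eventually_ge_atTop 0).and eventually_all).exists

lemma exp_neg_mul_le_one {γ τ : ℝ} (hγ : 0 ≤ γ) (hτ : 0 ≤ τ) : exp (-γ * τ) ≤ 1 := by
  rw [Real.exp_le_one_iff, neg_mul]
  exact neg_nonpos.2 (mul_nonneg hγ hτ)

-- `(E e^{γτ} - Q) e^τ` is nonincreasing when `g ≤ Q e^{-γτ}`.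
lemma ExpDecay.of_hasDerivAt_le {γ : ℝ} {E E' g : ℝ → ℝ} (hc : ContinuousOn E (Ici 0))
    (hd : ∀ τ, 0 < τ → HasDerivAt E (E' τ) τ) (initial : 0 ≤ E 0)
    (h : ∀ τ, 0 < τ → E' τ ≤ -(γ + 1) * E τ + g τ) (hg : ExpDecay γ g) : ExpDecay γ E := by
  obtain ⟨Q, hQ, forcing_le⟩ := hg
  have antitone := antitoneOn_Ici_of_hasDerivAt_nonpos
    (f := fun τ => (E τ * exp (γ * τ) - Q) * exp τ)
    (f' := fun τ => ((E' τ + (γ + 1) * E τ) * exp (γ * τ) - Q) * exp τ)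
    (((hc.mul (by fun_prop)).sub continuousOn_const).mul (by fun_prop))
    (fun τ hτ => ((((hd τ hτ).mul ((hasDerivAt_id τ).const_mul γ).exp).sub_const Q).mul
      (Real.hasDerivAt_exp τ)).congr_deriv (by simp only [id, Pi.mul_apply]; ring))
    fun τ hτ => by
      refine mul_nonpos_of_nonpos_of_nonneg (sub_nonpos.2 ?_) (exp_pos _).le
      calc (E' τ + (γ + 1) * E τ) * exp (γ * τ) ≤ Q * exp (-γ * τ) * exp (γ * τ) := by
            gcongr
            linarith [h τ hτ, forcing_le τ hτ.le]
        _ = Q := by rw [mul_assoc, ← Real.exp_add, neg_mul, neg_add_cancel, Real.exp_zero, mul_one]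
  refine ⟨E 0 + Q, add_nonneg initial hQ, fun τ hτ => ?_⟩
  have weighted_le := antitone self_mem_Ici hτ hτ
  simp only [mul_zero, Real.exp_zero, mul_one] at weighted_le
  have bounded : E τ * exp (γ * τ) ≤ E 0 + Q := by
    by_contra! lt
    nlinarith [Real.one_le_exp hτ]
  calc E τ = E τ * exp (γ * τ) * exp (-γ * τ) := by
        rw [mul_assoc, ← Real.exp_add, neg_mul, add_neg_cancel, Real.exp_zero, mul_one]
    _ ≤ (E 0 + Q) * exp (-γ * τ) := by gcongr

/-- Uniform decay of `f x τ` for `τ ≥ 0` at the exponential rate `γ`. -/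
def UniformExpDecay (γ : ℝ) (f : ℝ → ℝ → ℝ) : Prop :=
  ∃ M : ℝ, ∀ τ, 0 ≤ τ → ∀ x, |f x τ| ≤ M * exp (-γ * τ)

lemma UniformExpDecay.exists_forall_mem {ι : Type*} {s : Set ι} (hs : s.Finite) {γ : ℝ}
    {f : ι → ℝ → ℝ → ℝ} (h : ∀ i ∈ s, UniformExpDecay γ (f i)) :
    ∃ M : ℝ, 0 ≤ M ∧ ∀ i ∈ s, ∀ τ, 0 ≤ τ → ∀ x, |f i x τ| ≤ M * exp (-γ * τ) :=
  exists_nonneg_forall_of_mono hs (fun _ _ _ le bound τ hτ x => (bound τ hτ x).trans (by gcongr)) h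

lemma ClNorm_le {l : ℕ} {f : ℝ → ℝ} {M : ℝ} (h : ∀ j ≤ l, ∀ x, |iteratedDeriv j f x| ≤ M) :
    ClNorm l f ≤ M := by
  have hM : 0 ≤ M := (abs_nonneg _).trans (h 0 l.zero_le 0)
  exact Real.iSup_le (fun j => Real.iSup_le (fun θ => h j (Nat.lt_succ_iff.1 j.2) θ) hM) hM

lemma iteratedDeriv_sub_const (f : ℝ → ℝ) (c : ℝ) {j : ℕ} (hj : j ≠ 0) :
    iteratedDeriv j (fun x => f x - c) = iteratedDeriv j f := by
  obtain ⟨i, rfl⟩ := Nat.exists_eq_succ_of_ne_zero hj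
  rw [iteratedDeriv_succ', iteratedDeriv_succ']
  congr 1
  exact funext fun x => deriv_sub_const c

lemma SmoothPeriodic.abs_sub_periodMean_le_of_abs_deriv_le {f : ℝ → ℝ} (hf : SmoothPeriodic f)
    {B : ℝ} (h : ∀ x, |deriv f x| ≤ B) (x : ℝ) : |f x - periodMean f| ≤ 2 * π * B := by
  rw [abs_sub_comm]
  refine abs_periodMean_sub_le hf.continuous fun y =>
    (hf.abs_sub_le_integral_abs_deriv y x).trans ?_
  calc ∫ z in 0..(2 * π), |deriv f z| ≤ ∫ _ in 0..(2 * π), B :=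
        integral_period_mono hf.deriv.continuous.abs continuous_const h
    _ = 2 * π * B := by rw [intervalIntegral.integral_const, sub_zero, smul_eq_mul]

namespace RescaledRadiusFlow

variable {p : ℕ} {r : ℝ → ℝ → ℝ} {U : ℝ}

lemma boundedCurvature (F : RescaledRadiusFlow p r) (curvature_le : ∀ θ τ, 0 ≤ τ → (r θ τ)⁻¹ ≤ U)
    {τ : ℝ} (hτ : 0 ≤ τ) : BoundedCurvature U (r · τ) where
  toSmoothPeriodic := F.smoothPeriodic hτ
  pos x := F.pos x τ hτ
  inv_le x := curvature_le x τ hτ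

lemma bound_nonneg (F : RescaledRadiusFlow p r) (curvature_le : ∀ θ τ, 0 ≤ τ → (r θ τ)⁻¹ ≤ U) :
    0 ≤ U :=
  (F.boundedCurvature curvature_le le_rfl).bound_nonneg

lemma expDecay_derivEnergy (F : RescaledRadiusFlow p r) (hp : p ≠ 0)
    (decay_one : ExpDecay (6 * p - 2) fun τ => derivEnergy 1 (r · τ)) {b : ℝ} (hb : 0 < b)
    (le_curvature : ∀ θ τ, 0 ≤ τ → b ≤ (r θ τ)⁻¹)
    (curvature_le : ∀ θ τ, 0 ≤ τ → (r θ τ)⁻¹ ≤ U) {l : ℕ} (hl : l ≠ 0) :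
    ExpDecay (6 * p - 2) fun τ => derivEnergy l (r · τ) := by
  have one_le : (1 : ℝ) ≤ p := by exact_mod_cast Nat.one_le_iff_ne_zero.2 hp
  induction l using Nat.strong_induction_on with
  | _ l ih =>
    rcases eq_or_ne l 1 with rfl | hl_one
    · exact decay_one
    obtain ⟨A, hA, lower_le⟩ := exists_nonneg_forall_of_mono (finite_Ico 1 l)
      (P := fun j C => ∀ τ, 0 ≤ τ → derivEnergy j (r · τ) ≤ C)
      (fun _ _ _ le bound τ hτ => (bound τ hτ).trans le) fun j hj => by
        obtain ⟨M, hM, energy_le⟩ := ih j hj.2 (Nat.one_le_iff_ne_zero.1 hj.1)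
        exact ⟨M, fun τ hτ => (energy_le τ hτ).trans
          (mul_le_of_le_one_right hM (exp_neg_mul_le_one (by linarith) hτ))⟩
    obtain ⟨C, hC, rate_le⟩ := exists_energyRate_le (l := l) (by omega) hp hA hb
      (F.bound_nonneg curvature_le) (show (0 : ℝ) ≤ 6 * p - 1 by linarith)
    refine ExpDecay.of_hasDerivAt_le (F.continuousOn_derivEnergy l)
      (fun τ hτ => F.hasDerivAt_derivEnergy hτ l) (derivEnergy_nonneg l _)
      (g := fun τ => C * derivEnergy 1 (r · τ)) (fun τ hτ => ?_) ?_
    · refine (rate_le _ (F.boundedCurvature curvature_le hτ.le)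
        (fun x => le_curvature x τ hτ.le) fun j hj hjl =>
          lower_le j ⟨Nat.one_le_iff_ne_zero.2 hj, hjl⟩ τ hτ.le).trans_eq ?_
      ring
    · obtain ⟨M, hM, energy_le⟩ := decay_one
      exact ⟨C * M, by positivity, fun τ hτ =>
        (mul_le_mul_of_nonneg_left (energy_le τ hτ) hC).trans_eq (mul_assoc _ _ _).symm⟩

lemma uniformExpDecay_iteratedDeriv (F : RescaledRadiusFlow p r) {j : ℕ} (hj : j ≠ 0)
    (decay : ExpDecay (6 * p - 2) fun τ => derivEnergy (j + 1) (r · τ)) :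
    UniformExpDecay (3 * p - 1) fun x τ => iteratedDeriv j (r · τ) x := by
  obtain ⟨M, hM, energy_le⟩ := decay
  refine ⟨√(2 * π * M), fun τ hτ x => abs_le_of_sq_le_sq ?_ (by positivity)⟩
  calc iteratedDeriv j (r · τ) x ^ 2 ≤ 2 * π * derivEnergy (j + 1) (r · τ) :=
        (F.smoothPeriodic hτ).sq_iteratedDeriv_le hj x
    _ ≤ 2 * π * (M * exp (-(6 * p - 2) * τ)) := by gcongr; exact energy_le τ hτ
    _ = (√(2 * π * M) * exp (-(3 * p - 1) * τ)) ^ 2 := by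
        rw [mul_pow, Real.sq_sqrt (by positivity), ← Real.exp_nat_mul, mul_assoc (2 * π)]
        congr 3
        push_cast
        ring

lemma uniformExpDecay_iteratedDeriv_inv (F : RescaledRadiusFlow p r) (hp : p ≠ 0)
    (curvature_le : ∀ θ τ, 0 ≤ τ → (r θ τ)⁻¹ ≤ U)
    (decay : ∀ j, j ≠ 0 → UniformExpDecay (3 * p - 1) fun x τ => iteratedDeriv j (r · τ) x)
    {j : ℕ} (hj : j ≠ 0) :
    UniformExpDecay (3 * p - 1) fun x τ => iteratedDeriv j (fun θ => (r θ τ)⁻¹) x := by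
  have one_le : (1 : ℝ) ≤ p := by exact_mod_cast Nat.one_le_iff_ne_zero.2 hp
  obtain ⟨A, hA, deriv_le⟩ := UniformExpDecay.exists_forall_mem (finite_Icc 1 j)
    fun i hi => decay i (Nat.one_le_iff_ne_zero.1 hi.1)
  have controlled {B τ : ℝ} (hτ : 0 ≤ τ) (hB : A * exp (-(3 * p - 1) * τ) ≤ B) :
      ControlledRadius U B j (r · τ) :=
    { F.boundedCurvature curvature_le hτ with
      abs_iteratedDeriv_le := fun i hi hij x =>
        (deriv_le i ⟨Nat.one_le_iff_ne_zero.2 hi, hij⟩ τ hτ x).trans hB }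
  obtain ⟨D, hD, chain_rule_le⟩ := exists_abs_iteratedDeriv_inv_pow_le_derivAbsSum hj
    (F.bound_nonneg curvature_le) hA hj (j.le_add_right 2) 1
  refine ⟨D * (j * A), fun τ hτ x => ?_⟩
  have exp_le := mul_le_of_le_one_right hA
    (exp_neg_mul_le_one (show (0 : ℝ) ≤ 3 * p - 1 by linarith) hτ)
  calc |iteratedDeriv j (fun θ => (r θ τ)⁻¹) x| ≤ D * derivAbsSum (r · τ) j x := by
        have := chain_rule_le _ (controlled hτ exp_le) x
        rwa [pow_one] at this
    _ ≤ D * (j * (A * exp (-(3 * p - 1) * τ))) := by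
        gcongr
        exact (controlled hτ le_rfl).derivAbsSum_le (by positivity) le_rfl x
    _ = D * (j * A) * exp (-(3 * p - 1) * τ) := by ring

lemma uniformExpDecay_iteratedDeriv_inv_sub_periodMean (F : RescaledRadiusFlow p r)
    (decay : ∀ j, j ≠ 0 →
      UniformExpDecay (3 * p - 1) fun x τ => iteratedDeriv j (fun θ => (r θ τ)⁻¹) x) (j : ℕ) :
    UniformExpDecay (3 * p - 1) fun x τ =>
      iteratedDeriv j (fun θ => (r θ τ)⁻¹ - periodMean fun θ => (r θ τ)⁻¹) x := by
  rcases eq_or_ne j 0 with rfl | hj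
  · obtain ⟨C, deriv_le⟩ := decay 1 one_ne_zero
    simp only [iteratedDeriv_one] at deriv_le
    refine ⟨2 * π * C, fun τ hτ x => ?_⟩
    simp only [iteratedDeriv_zero, mul_assoc (2 * π)]
    exact ((F.smoothPeriodic hτ).inv (F.ne_zero hτ)).abs_sub_periodMean_le_of_abs_deriv_le
      (deriv_le τ hτ) x
  · simpa only [iteratedDeriv_sub_const _ _ hj] using decay j hj

lemma exists_ClNorm_inv_sub_periodMean_le (F : RescaledRadiusFlow p r) (hp : p ≠ 0)
    (decay_one : ExpDecay (6 * p - 2) fun τ => derivEnergy 1 (r · τ)) {a b : ℝ} (ha : 0 < a)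
    (mem_Icc : ∀ θ τ, 0 ≤ τ → r θ τ ∈ Icc a b) (l : ℕ) :
    ∃ M : ℝ, 0 < M ∧ ∀ τ, 0 ≤ τ →
      ClNorm l (fun θ => (r θ τ)⁻¹ - periodMean fun θ => (r θ τ)⁻¹)
        ≤ M * exp (-(3 * p - 1) * τ) := by
  have le_curvature (θ τ : ℝ) (hτ : 0 ≤ τ) : b⁻¹ ≤ (r θ τ)⁻¹ :=
    inv_anti₀ (F.pos θ τ hτ) (mem_Icc θ τ hτ).2
  have curvature_le (θ τ : ℝ) (hτ : 0 ≤ τ) : (r θ τ)⁻¹ ≤ a⁻¹ := inv_anti₀ ha (mem_Icc θ τ hτ).1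
  have hb : 0 < b⁻¹ := inv_pos.2 ((F.pos 0 0 le_rfl).trans_le (mem_Icc 0 0 le_rfl).2)
  have decay_energy (j : ℕ) (hj : j ≠ 0) :=
    F.expDecay_derivEnergy hp decay_one hb le_curvature curvature_le hj
  have decay_radius (j : ℕ) (hj : j ≠ 0) :=
    F.uniformExpDecay_iteratedDeriv hj (decay_energy (j + 1) j.succ_ne_zero)
  have decay_curvature (j : ℕ) (hj : j ≠ 0) :=
    F.uniformExpDecay_iteratedDeriv_inv hp curvature_le decay_radius hj
  obtain ⟨M, hM, deriv_le⟩ := UniformExpDecay.exists_forall_mem (finite_Iic l)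
    fun j _ => F.uniformExpDecay_iteratedDeriv_inv_sub_periodMean decay_curvature j
  refine ⟨M + 1, by positivity, fun τ hτ => ClNorm_le fun j hj x => ?_⟩
  exact (deriv_le j hj τ hτ x).trans (by gcongr; linarith)

end RescaledRadiusFlow

/-! ### Initial data -/

lemma le_periodMean {f : ℝ → ℝ} {b : ℝ} (hf : Continuous f) (h : ∀ x, b ≤ f x) :
    b ≤ periodMean f := by
  have integral_le := integral_period_mono continuous_const hf h
  rw [intervalIntegral.integral_const, smul_eq_mul, sub_zero] at integral_le
  rw [periodMean, inv_mul_eq_div, le_div_iff₀ two_pi_pos]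
  linarith

lemma periodMean_const_mul (c : ℝ) (f : ℝ → ℝ) :
    periodMean (fun x => c * f x) = c * periodMean f := by
  rw [periodMean, periodMean, intervalIntegral.integral_const_mul, mul_left_comm]

lemma derivEnergy_const_mul (j : ℕ) (c : ℝ) (f : ℝ → ℝ) :
    derivEnergy j (fun x => c * f x) = c ^ 2 * derivEnergy j f := by
  simp only [derivEnergy, iteratedDeriv_const_mul_field, mul_pow,
    intervalIntegral.integral_const_mul]

lemma seminorm2_nonneg (f : ℝ → ℝ) : 0 ≤ seminorm2 f :=
  le_max_of_le_left (Real.iSup_nonneg fun _ => by positivity)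

namespace SmoothPeriodic

variable {f : ℝ → ℝ}

lemma derivEnergy_one_inv_le (hf : SmoothPeriodic f) {b : ℝ} (hb : 0 < b) (le : ∀ x, b ≤ f x) :
    derivEnergy 1 f⁻¹ ≤ b⁻¹ ^ 4 * derivEnergy 1 f := by
  have pos (x : ℝ) : 0 < f x := hb.trans_le (le x)
  have deriv_inv (x : ℝ) : deriv f⁻¹ x ^ 2 = (f x)⁻¹ ^ 4 * deriv f x ^ 2 := by
    rw [((hf.hasDerivAt x).inv (pos x).ne').deriv]
    ring
  rw [derivEnergy_one, derivEnergy_one, ← intervalIntegral.integral_const_mul]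
  refine integral_period_mono ((hf.inv fun x => (pos x).ne').deriv.continuous.pow 2)
    (continuous_const.mul (hf.deriv.continuous.pow 2)) fun x => ?_
  rw [deriv_inv]
  have := inv_nonneg.2 (pos x).le
  gcongr
  exact le x

-- `a / 2 ≤ f ≤ 3 a / 2`, hence `2π ∫ ((1/f)')² ≤ (2/a)⁴ (η a)²` while the mean of `1/f` is at
-- least `2 / (3 a)`.
lemma derivEnergy_one_inv_le_sq_periodMean_inv (hf : SmoothPeriodic f) (pos : ∀ x, 0 < f x) {η : ℝ}
    (hη : 0 ≤ η) (le_half : η ≤ 1 / 2)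
    (h : 2 * π * derivEnergy 1 f ≤ (η * periodMean f) ^ 2) :
    2 * π * derivEnergy 1 f⁻¹ ≤ (6 * η * periodMean f⁻¹) ^ 2 := by
  have mean_pos := periodMean_pos hf.continuous pos
  set a := periodMean f
  have close (x : ℝ) := abs_le.1 (hf.abs_sub_periodMean_le (by positivity) h x)
  have osc_le : η * a ≤ a / 2 := by nlinarith
  have inv_mean_le : (3 / 2 * a)⁻¹ ≤ periodMean f⁻¹ :=
    le_periodMean (hf.inv fun x => (pos x).ne').continuous fun x =>
      inv_anti₀ (pos x) (by linarith [(close x).2])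
  calc 2 * π * derivEnergy 1 f⁻¹ ≤ 2 * π * ((a / 2)⁻¹ ^ 4 * derivEnergy 1 f) := by
        gcongr
        exact hf.derivEnergy_one_inv_le (by positivity) fun x => by linarith [(close x).1]
    _ = (a / 2)⁻¹ ^ 4 * (2 * π * derivEnergy 1 f) := by ring
    _ ≤ (a / 2)⁻¹ ^ 4 * (η * a) ^ 2 := by gcongr
    _ = (6 * η * (3 / 2 * a)⁻¹) ^ 2 := by field_simp; ring
    _ ≤ (6 * η * periodMean f⁻¹) ^ 2 := by gcongr

end SmoothPeriodic

lemma exists_derivEnergy_le_sq_periodMean {η : ℝ} (hη : 0 < η) :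
    ∃ C > (0 : ℝ), ∀ ψ, SmoothPeriodic ψ → C * seminorm2 ψ ≤ (fCoeff ψ 0).re →
      2 * π * derivEnergy 1 ψ ≤ (η * periodMean ψ) ^ 2 := by
  set X := 2 * π * (4 * π * ∑' n : ℤ, ((n : ℝ) ^ 2)⁻¹) with hX
  have X_nonneg : 0 ≤ X := by positivity
  refine ⟨(√X + 1) / η, by positivity, fun ψ hψ le_mean => ?_⟩
  rw [fCoeff_zero, Complex.ofReal_re, div_mul_eq_mul_div, div_le_iff₀ hη] at le_mean
  have := seminorm2_nonneg ψ
  calc 2 * π * derivEnergy 1 ψ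
      ≤ 2 * π * (4 * π * (∑' n : ℤ, ((n : ℝ) ^ 2)⁻¹) * seminorm2 ψ ^ 2) := by
        gcongr
        exact hψ.derivEnergy_one_le_seminorm2
    _ = (√X * seminorm2 ψ) ^ 2 := by rw [mul_pow, Real.sq_sqrt X_nonneg, hX]; ring
    _ ≤ (η * periodMean ψ) ^ 2 := pow_le_pow_left₀ (by positivity) (by linarith) 2

lemma exists_derivEnergy_inv_const_mul_lt {ε : ℝ} (hε : 0 < ε) :
    ∃ C > (0 : ℝ), ∀ ψ, SmoothPeriodic ψ → (∀ x, 0 < ψ x) → C * seminorm2 ψ ≤ (fCoeff ψ 0).re →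
      ∀ c : ℝ, 0 < c → 2 * π * derivEnergy 1 (fun x => (c * ψ x)⁻¹)
        < (ε * periodMean fun x => (c * ψ x)⁻¹) ^ 2 := by
  have η_pos : 0 < min (1 / 2) (ε / 7) := by positivity
  obtain ⟨C, hC, energy_le⟩ := exists_derivEnergy_le_sq_periodMean η_pos
  refine ⟨C, hC, fun ψ hψ pos le_mean c hc => ?_⟩
  have inv_le := hψ.derivEnergy_one_inv_le_sq_periodMean_inv pos η_pos.le (min_le_left _ _)
    (energy_le ψ hψ le_mean)
  have mean_pos := periodMean_pos (hψ.inv fun x => (pos x).ne').continuous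
    fun x => inv_pos.2 (pos x)
  have lt : 6 * min (1 / 2) (ε / 7) < ε := by linarith [min_le_right (1 / 2) (ε / 7)]
  simp only [mul_inv]
  rw [derivEnergy_const_mul 1 c⁻¹, periodMean_const_mul c⁻¹]
  calc 2 * π * (c⁻¹ ^ 2 * derivEnergy 1 ψ⁻¹) = c⁻¹ ^ 2 * (2 * π * derivEnergy 1 ψ⁻¹) := by ring
    _ ≤ c⁻¹ ^ 2 * (6 * min (1 / 2) (ε / 7) * periodMean ψ⁻¹) ^ 2 := by gcongr
    _ < c⁻¹ ^ 2 * (ε * periodMean ψ⁻¹) ^ 2 := by gcongr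
    _ = (ε * (c⁻¹ * periodMean ψ⁻¹)) ^ 2 := by ring

/-! ### Rescaling the curve shortening flow -/

/-- The constant `c = ((p+1)T/p)^{1/(p+1)}`, for which `k̃(θ,τ) = c e^{-τ} k(θ,t)`. -/
noncomputable def normalizingFactor (p : ℕ) (T : ℝ) : ℝ :=
  (((p : ℝ) + 1) / p * T) ^ ((1 : ℝ) / ((p : ℝ) + 1))

section Rescaling

variable {p : ℕ} {T : ℝ}

lemma normalizingFactor_pos (hp : p ≠ 0) (hT : 0 < T) : 0 < normalizingFactor p T := by
  have := Nat.pos_of_ne_zero hp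
  rw [normalizingFactor]
  positivity

lemma normalizingFactor_pow (hT : 0 < T) :
    normalizingFactor p T ^ (p + 1) = ((p : ℝ) + 1) / p * T := by
  rw [normalizingFactor, ← Real.rpow_natCast, ← Real.rpow_mul (by positivity), Nat.cast_add_one,
    one_div_mul_cancel (by positivity), Real.rpow_one]

lemma ktilde_eq (hT : 0 < T) (k : ℝ → ℝ → ℝ) (θ τ : ℝ) :
    ktilde p T k θ τ = normalizingFactor p T * exp (-τ) * k θ (tOf p T τ) := by
  have remaining_time : T - tOf p T τ = T * exp (-((p : ℝ) + 1) * τ) := by rw [tOf]; ring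
  have exp_rpow : exp (-((p : ℝ) + 1) * τ) ^ ((1 : ℝ) / ((p : ℝ) + 1)) = exp (-τ) := by
    rw [← Real.exp_mul]
    congr 1
    field_simp
  rw [ktilde, normalizingFactor, remaining_time, Real.mul_rpow hT.le (exp_pos _).le, exp_rpow,
    Real.mul_rpow (by positivity) hT.le, mul_assoc _ (T ^ _)]

lemma ktilde_zero (hT : 0 < T) (k : ℝ → ℝ → ℝ) (θ : ℝ) :
    ktilde p T k θ 0 = normalizingFactor p T * k θ 0 := by
  simp [ktilde_eq hT, tOf]

lemma tOf_mem_Ico (hT : 0 < T) {τ : ℝ} (hτ : 0 ≤ τ) : tOf p T τ ∈ Ico 0 T := by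
  have exp_le : exp (-((p : ℝ) + 1) * τ) ≤ 1 := exp_neg_mul_le_one (by positivity) hτ
  exact ⟨mul_nonneg hT.le (sub_nonneg.2 exp_le),
    mul_lt_of_lt_one_right hT (sub_lt_self 1 (exp_pos _))⟩

lemma tendsto_tOf (hT : 0 < T) : Tendsto (tOf p T) atTop (nhdsWithin T (Iio T)) := by
  refine tendsto_nhdsWithin_iff.2
    ⟨?_, (eventually_ge_atTop 0).mono fun τ hτ => (tOf_mem_Ico hT hτ).2⟩
  have exponent : Tendsto (fun τ : ℝ => -((p : ℝ) + 1) * τ) atTop atBot :=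
    tendsto_id.const_mul_atTop_of_neg (neg_neg_of_pos (by positivity))
  have limit := ((Real.tendsto_exp_atBot.comp exponent).const_sub 1).const_mul T
  rwa [sub_zero, mul_one] at limit

lemma hasDerivAt_tOf (hp : p ≠ 0) (hT : 0 < T) (τ : ℝ) :
    HasDerivAt (tOf p T) (p * (normalizingFactor p T * exp (-τ)) ^ (p + 1)) τ := by
  refine ((((hasDerivAt_id τ).const_mul (-((p : ℝ) + 1))).exp.const_sub 1).const_mul T).congr_deriv
    ?_
  have exponent : ((p + 1 : ℕ) : ℝ) * -τ = -((p : ℝ) + 1) * τ := by push_cast; ring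
  rw [mul_pow, normalizingFactor_pow hT, ← Real.exp_nat_mul, exponent]
  simp only [id]
  field_simp

end Rescaling

lemma integral_exp_neg_div_eq_zero {g : ℝ → ℝ}
    (h : ∫ θ in (0 : ℝ)..(2 * π), Complex.exp (Complex.I * θ) / g θ = 0) :
    ∫ θ in (0 : ℝ)..(2 * π), Complex.exp (-(Complex.I * θ)) / g θ = 0 := by
  have conj_integrand (θ : ℝ) : Complex.exp (-(Complex.I * θ)) / g θ
      = starRingEnd ℂ (Complex.exp (Complex.I * θ) / g θ) := by
    rw [map_div₀, ← Complex.exp_conj]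
    simp
  simp only [conj_integrand]
  rw [intervalIntegral.integral_of_le two_pi_nonneg, integral_conj,
    ← intervalIntegral.integral_of_le two_pi_nonneg, h, map_zero]

lemma fCoeff_inv_const_mul (g : ℝ → ℝ) (c : ℝ) (n : ℤ) :
    fCoeff (fun x => (c * g x)⁻¹) n = 1 / (2 * π) * ((c : ℂ)⁻¹ *
      ∫ θ in (0 : ℝ)..(2 * π), Complex.exp (-(Complex.I * n * θ)) / g θ) := by
  have integrand (θ : ℝ) : (((c * g θ)⁻¹ : ℝ) : ℂ) * Complex.exp (-(Complex.I * n * θ))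
      = (c : ℂ)⁻¹ * (Complex.exp (-(Complex.I * n * θ)) / g θ) := by
    push_cast
    ring
  simp only [fCoeff, integrand, intervalIntegral.integral_const_mul]

lemma SmoothPeriodic.iteratedDeriv_two_pow_succ {f : ℝ → ℝ} (hf : SmoothPeriodic f) (m : ℕ)
    (x : ℝ) : iteratedDeriv 2 (f ^ (m + 1)) x
      = (m + 1) * (m * f x ^ (m - 1) * deriv f x ^ 2 + f x ^ m * deriv (deriv f) x) := by
  have first : deriv (f ^ (m + 1)) = fun y => (m + 1) * ((f ^ m) y * deriv f y) := by
    funext y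
    rw [((hf.hasDerivAt y).pow (m + 1)).deriv]
    simp only [Nat.add_sub_cancel, Pi.pow_apply]
    push_cast
    ring
  rw [iteratedDeriv_succ, iteratedDeriv_one, first]
  refine ((((hf.hasDerivAt x).pow m).mul
    (hf.deriv.hasDerivAt x)).const_mul ((m : ℝ) + 1)).deriv.trans ?_
  simp only [Pi.pow_apply]
  ring

namespace IsPCSF

variable {p : ℕ} {T : ℝ} {k : ℝ → ℝ → ℝ} {ψ : ℝ → ℝ}

lemma ktilde_pos (H : IsPCSF p T k ψ) (hp : p ≠ 0) (hT : 0 < T) (θ : ℝ) {τ : ℝ} (hτ : 0 ≤ τ) :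
    0 < ktilde p T k θ τ := by
  obtain ⟨-, -, pos, -⟩ := H
  have := normalizingFactor_pos hp hT
  have := pos θ (tOf p T τ) (tOf_mem_Ico hT hτ)
  rw [ktilde_eq hT]
  positivity

lemma smoothSpaceTime_ktilde (H : IsPCSF p T k ψ) (hT : 0 < T) :
    SmoothSpaceTime (ktilde p T k) := by
  have smooth_time : ContDiff ℝ (⊤ : ℕ∞) fun q : ℝ × ℝ => (q.1, tOf p T q.2) := by
    unfold tOf
    fun_prop
  have smooth_factor :
      ContDiff ℝ (⊤ : ℕ∞) fun q : ℝ × ℝ => normalizingFactor p T * exp (-q.2) := by fun_prop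
  simp only [SmoothSpaceTime, ktilde_eq hT]
  exact smooth_factor.contDiffOn.mul (H.1.comp smooth_time.contDiffOn
    fun q hq => ⟨mem_univ _, tOf_mem_Ico hT hq.2⟩)

lemma ktilde_periodic (H : IsPCSF p T k ψ) (τ : ℝ) :
    Function.Periodic (ktilde p T k · τ) (2 * π) :=
  fun θ => by simp only [ktilde, H.2.1]

lemma smoothPeriodic_ktilde (H : IsPCSF p T k ψ) (hT : 0 < T) {τ : ℝ} (hτ : 0 ≤ τ) :
    SmoothPeriodic (ktilde p T k · τ) :=
  ⟨(H.smoothSpaceTime_ktilde hT).contDiff_slice hτ, H.ktilde_periodic τ⟩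

lemma hasDerivAt_ktilde (H : IsPCSF p T k ψ) (hp : p ≠ 0) (hT : 0 < T) (θ : ℝ) {τ : ℝ}
    (hτ : 0 ≤ τ) :
    HasDerivAt (fun s => ktilde p T k θ s)
      (-ktilde p T k θ τ + ktilde p T k θ τ ^ 2 *
        (iteratedDeriv 2 ((ktilde p T k · τ) ^ p) θ + ktilde p T k θ τ ^ p)) τ := by
  obtain ⟨m, rfl⟩ := Nat.exists_eq_add_one_of_ne_zero hp
  have factor_deriv : HasDerivAt (fun s => normalizingFactor (m + 1) T * exp (-s))
      (-(normalizingFactor (m + 1) T * exp (-τ))) τ := by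
    simpa using ((hasDerivAt_id τ).neg.exp).const_mul (normalizingFactor (m + 1) T)
  rw [(H.smoothPeriodic_ktilde hT hτ).iteratedDeriv_two_pow_succ]
  obtain ⟨-, -, -, evolution, -⟩ := H
  have curvature_deriv := (evolution θ _ (tOf_mem_Ico hT hτ)).comp τ (hasDerivAt_tOf hp hT τ)
  simp only [ktilde_eq hT, deriv_const_mul_field, deriv_const_mul_field']
  refine (factor_deriv.mul curvature_deriv).congr_deriv ?_
  simp only [Function.comp_apply, Nat.add_sub_cancel, show m + 1 - 2 = m - 1 by omega]
  rcases m with _ | m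
  · simp only [Nat.zero_sub]
    norm_num
    ring
  · simp only [Nat.add_sub_cancel]
    push_cast
    field_simp
    ring

lemma exists_le_exp_mul_ktilde (H : IsPCSF p T k ψ) (hp : p ≠ 0) (hT : 0 < T) (M : ℝ) :
    ∃ τ₀, ∀ τ, τ₀ ≤ τ → ∃ θ, M ≤ exp τ * ktilde p T k θ τ := by
  obtain ⟨-, -, -, -, -, -, -, -, blowUp, -⟩ := H
  have factor_pos := normalizingFactor_pos hp hT
  obtain ⟨τ₀, lt_sup⟩ := eventually_atTop.1
    ((blowUp.comp (tendsto_tOf (p := p) hT)).eventually_gt_atTop (M / normalizingFactor p T))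
  refine ⟨τ₀, fun τ hτ => ?_⟩
  have : Nonempty (Icc (0 : ℝ) (2 * π)) := ⟨0, left_mem_Icc.2 two_pi_nonneg⟩
  obtain ⟨θ, lt⟩ := exists_lt_of_lt_ciSup (lt_sup τ hτ)
  refine ⟨θ, ((div_lt_iff₀ factor_pos).1 lt).le.trans_eq ?_⟩
  rw [ktilde_eq hT, Real.exp_neg]
  field_simp

lemma fCoeff_inv_ktilde_eq_zero (H : IsPCSF p T k ψ) (hT : 0 < T) {τ : ℝ} (hτ : 0 ≤ τ) :
    fCoeff (fun θ => (ktilde p T k θ τ)⁻¹) 1 = 0 ∧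
      fCoeff (fun θ => (ktilde p T k θ τ)⁻¹) (-1) = 0 := by
  obtain ⟨-, -, -, -, -, -, -, -, -, closed⟩ := H
  have closed_at := closed _ (tOf_mem_Ico (p := p) hT hτ)
  simp only [ktilde_eq hT, fCoeff_inv_const_mul, Int.cast_neg, Int.cast_one, mul_neg, mul_one,
    neg_mul, neg_neg, closed_at, integral_exp_neg_div_eq_zero closed_at, mul_zero, and_self]

lemma rescaledRadiusFlow (H : IsPCSF p T k ψ) (hp : p ≠ 0) (hT : 0 < T) :
    RescaledRadiusFlow p fun θ τ => (ktilde p T k θ τ)⁻¹ where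
  smooth := (H.smoothSpaceTime_ktilde hT).inv fun θ _ hτ => (H.ktilde_pos hp hT θ hτ).ne'
  periodic θ τ := congrArg Inv.inv (H.ktilde_periodic τ θ)
  pos θ _ hτ := inv_pos.2 (H.ktilde_pos hp hT θ hτ)
  hasDerivAt θ τ hτ := by
    have pos := H.ktilde_pos hp hT θ hτ.le
    refine ((H.hasDerivAt_ktilde hp hT θ hτ.le).inv pos.ne').congr_deriv ?_
    have inv_radius : (fun x => (ktilde p T k x τ)⁻¹)⁻¹ = (ktilde p T k · τ) :=
      funext fun _ => inv_inv _
    simp only [radiusSpeed, inv_radius, Pi.sub_apply, Pi.pow_apply]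
    field_simp
    ring
  fCoeff_one _ hτ := (H.fCoeff_inv_ktilde_eq_zero hT hτ).1
  fCoeff_neg_one _ hτ := (H.fCoeff_inv_ktilde_eq_zero hT hτ).2
  blowUp M := by simpa only [inv_inv] using H.exists_le_exp_mul_ktilde hp hT M

end IsPCSF

/-- There is `c_p > 0` depending only on `p` such that if `ψ̂(0) ≥ c_p ‖ψ‖₂`,
then for every `l` there is `M_{p,l} > 0` with
`‖k̃(·,τ) - ũ(0,τ)‖_{C^l[0,2π]} ≤ M_{p,l} e^{-(3p-1)τ}` for all `τ ≥ 0`, where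
`ũ(0,τ) = (1/2π)∫₀^{2π} k̃(θ,τ) dθ`. -/
theorem statement13 (p : ℕ) (hp : 1 ≤ p) :
    ∃ cp > (0:ℝ), ∀ (T : ℝ), 0 < T → ∀ (k : ℝ → ℝ → ℝ) (ψ : ℝ → ℝ),
      IsPCSF p T k ψ →
      cp * seminorm2 ψ ≤ (fCoeff ψ 0).re →
      ∀ l : ℕ, ∃ M > (0:ℝ), ∀ τ : ℝ, 0 ≤ τ →
        ClNorm l (fun θ => ktilde p T k θ τ
            - (1 / (2 * Real.pi)) * ∫ x in (0:ℝ)..(2 * Real.pi), ktilde p T k x τ)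
          ≤ M * Real.exp (-(3 * (p : ℝ) - 1) * τ) := by
  have hp₀ : p ≠ 0 := Nat.one_le_iff_ne_zero.1 hp
  obtain ⟨δ₀, hδ₀, exists_decay⟩ := RescaledRadiusFlow.exists_expDecay_derivEnergy_one hp₀
  obtain ⟨cp, hcp, initial_small⟩ := exists_derivEnergy_inv_const_mul_lt hδ₀
  refine ⟨cp, hcp, fun T hT k ψ H mean_ge l => ?_⟩
  have F := H.rescaledRadiusFlow hp₀ hT
  obtain ⟨-, -, -, -, initial, smooth, pos, periodic, -⟩ := H
  obtain ⟨decay_one, mem_Icc⟩ := exists_decay _ F (by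
    simpa only [ktilde_zero hT, initial] using
      initial_small ψ ⟨smooth, periodic⟩ pos mean_ge _ (normalizingFactor_pos hp₀ hT))
  simpa only [inv_inv, periodMean, one_div] using
    F.exists_ClNorm_inv_sub_periodMean_le hp₀ decay_one (by norm_num) mem_Icc l
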